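/- arXiv:1009.4736 — 2 statements merged into one kernel-verified Lean document; each statement's English description precedes it below -/
import Mathlib

section
/- Let k < n/2 and suppose Π is a perfect n-half-period of an allowable sequence 𝚷, with initial arrangement (a_k, …, a_1, b_1, …, b_m, c_1, …, c_k), m = n − 2k. Then 𝚷 contains a perfect n-half-period Π′ with initial arrangement (a′_k, a′_{k−1}, …, a′_1, b′_1, …, b′_m, c′_1, …, c′_k) whose liberation sequence is either a′_1 a′_2 … a′_k c′_1 c′_2 … c′_k or c′_1 c′_2 … c′_k a′_1 a′_2 … a′_k. -/
/-- An `n`-half-period: a sequence `π_0, …, π_{n(n-1)/2}` of arrangements of `n`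
labeled elements in the positions `1, …, n` (recorded by `pos t x` = the position of
element `x` at time `t`), in which consecutive arrangements differ by a transposition
of the elements in two adjacent positions, and the last arrangement is the reverse of
the first. -/
structure HalfPeriod (n : ℕ) where
  pos : ℕ → Fin n → ℕ
  pos_mem : ∀ t, t ≤ n * (n - 1) / 2 → ∀ x, 1 ≤ pos t x ∧ pos t x ≤ n
  pos_inj : ∀ t, t ≤ n * (n - 1) / 2 → Function.Injective (pos t)
  step : ∀ t, t < n * (n - 1) / 2 → ∃ x y : Fin n,
    pos t y = pos t x + 1 ∧ pos (t + 1) x = pos t x + 1 ∧ pos (t + 1) y = pos t x ∧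
    ∀ z, z ≠ x → z ≠ y → pos (t + 1) z = pos t z
  reverse : ∀ x, pos (n * (n - 1) / 2) x = n + 1 - pos 0 x

namespace HalfPeriod

variable {n : ℕ}

/-- The number of transposition steps of an `n`-half-period. -/
def steps (n : ℕ) : ℕ := n * (n - 1) / 2

/-- Element `x` moves (changes position) at step `t`. -/
def Moved (hp : HalfPeriod n) (t : ℕ) (x : Fin n) : Prop :=
  hp.pos (t + 1) x ≠ hp.pos t x

/-- Step `t` is the transposition of the (distinct) elements `x` and `y`. -/
def SwapsAt (hp : HalfPeriod n) (t : ℕ) (x y : Fin n) : Prop :=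
  x ≠ y ∧ hp.Moved t x ∧ hp.Moved t y

/-- Step `t` is an `i`-transposition: it swaps the elements at positions `i` and `i+1`. -/
def GateAt (hp : HalfPeriod n) (t i : ℕ) : Prop :=
  ∃ x y : Fin n, hp.pos t x = i ∧ hp.pos t y = i + 1 ∧
    hp.pos (t + 1) x = i + 1 ∧ hp.pos (t + 1) y = i

/-- Step `t` is an `i`-critical transposition: an `i`- or an `(n-i)`-transposition. -/
def Critical (hp : HalfPeriod n) (t i : ℕ) : Prop :=
  hp.GateAt t i ∨ hp.GateAt t (n - i)

/-- Step `t` is a `(≤ k)`-critical transposition. -/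
def LeCritical (hp : HalfPeriod n) (t k : ℕ) : Prop :=
  ∃ i, 1 ≤ i ∧ i ≤ k ∧ hp.Critical t i

/-- `N_{≤ k}`: the number of `(≤ k)`-critical transpositions of the half-period. -/
noncomputable def NLe (hp : HalfPeriod n) (k : ℕ) : ℕ :=
  {t : ℕ | t < steps n ∧ hp.LeCritical t k}.ncard

end HalfPeriod
/-- An allowable sequence on `n` elements: a doubly infinite sequence of arrangements
of the `n` elements in positions `1, …, n`, consecutive arrangements differing by a
transposition of the elements in two adjacent positions, and the arrangement at time
`t + n(n-1)/2` being the reverse of the one at time `t`. -/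
structure AllowableSeq (n : ℕ) where
  pos : ℤ → Fin n → ℕ
  pos_mem : ∀ t x, 1 ≤ pos t x ∧ pos t x ≤ n
  pos_inj : ∀ t, Function.Injective (pos t)
  step : ∀ t : ℤ, ∃ x y : Fin n,
    pos t y = pos t x + 1 ∧ pos (t + 1) x = pos t x + 1 ∧ pos (t + 1) y = pos t x ∧
    ∀ z, z ≠ x → z ≠ y → pos (t + 1) z = pos t z
  reverse : ∀ (t : ℤ) (x : Fin n), pos (t + ((n * (n - 1) / 2 : ℕ) : ℤ)) x = n + 1 - pos t x

/-- The allowable sequence `S` contains the `n`-half-period `hp`: `hp` consists of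
`n(n-1)/2 + 1` consecutive arrangements of `S`. -/
def AllowableSeq.Contains {n : ℕ} (S : AllowableSeq n) (hp : HalfPeriod n) : Prop :=
  ∃ t₀ : ℤ, ∀ t : ℕ, t ≤ n * (n - 1) / 2 → ∀ x, hp.pos t x = S.pos (t₀ + t) x
/-- The initial arrangement of `hp` is `(a_k, a_{k-1}, …, a_1, b_1, …, b_m, c_1, …, c_k)`
with `m = n - 2k` (1-indexed subscripts: `a_j = a ⟨j-1⟩`, etc.). -/
def StandardStart {n : ℕ} (hp : HalfPeriod n) (k : ℕ) (a : Fin k → Fin n)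
    (b : Fin (n - 2 * k) → Fin n) (c : Fin k → Fin n) : Prop :=
  Function.Injective (Sum.elim a (Sum.elim b c)) ∧
  (∀ i, hp.pos 0 (a i) = k - (i : ℕ)) ∧
  (∀ i, hp.pos 0 (b i) = k + (i : ℕ) + 1) ∧
  (∀ i, hp.pos 0 (c i) = n - k + (i : ℕ) + 1)

/-- Element `z` is still confined at step `t`: it is an `a` that has stayed in the
positions `{1, …, k}` up to time `t`, or a `c` that has stayed in `{n-k+1, …, n}`. -/
def ConfinedAt {n : ℕ} (hp : HalfPeriod n) (k : ℕ) (a c : Fin k → Fin n)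
    (t : ℕ) (z : Fin n) : Prop :=
  ((∃ i, z = a i) ∧ ∀ s ≤ t, hp.pos s z ≤ k) ∨
  ((∃ i, z = c i) ∧ ∀ s ≤ t, n - k < hp.pos s z)

/-- The half-period has no confined transpositions. -/
def NoConfinedSteps {n : ℕ} (hp : HalfPeriod n) (k : ℕ) (a c : Fin k → Fin n) : Prop :=
  ∀ t, t < HalfPeriod.steps n → ∀ x y, hp.SwapsAt t x y →
    ¬ (ConfinedAt hp k a c t x ∧ ConfinedAt hp k a c t y)

/-- An `a`-element `z` becomes free at time `u`: `u` is the first time at which its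
position exceeds `k` (it has exited through the first `A`-gate). -/
def AFreedAt {n : ℕ} (hp : HalfPeriod n) (k : ℕ) (z : Fin n) (u : ℕ) : Prop :=
  k < hp.pos u z ∧ ∀ s < u, hp.pos s z ≤ k

/-- A `c`-element `z` becomes free at time `u`: `u` is the first time at which its
position is at most `n - k` (it has exited through the first `C`-gate). -/
def CFreedAt {n : ℕ} (hp : HalfPeriod n) (k : ℕ) (z : Fin n) (u : ℕ) : Prop :=
  hp.pos u z ≤ n - k ∧ ∀ s < u, n - k < hp.pos s z

/-- Step `t` occurs in the `A`-Zone: it swaps positions `(p, p+1)` with `p ≤ k`. -/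
def AZoneStep {n : ℕ} (hp : HalfPeriod n) (k t : ℕ) : Prop :=
  ∃ p, 1 ≤ p ∧ p ≤ k ∧ hp.GateAt t p

/-- Step `t` occurs in the `C`-Zone: it swaps positions `(p, p+1)` with `p ≥ k + m = n - k`. -/
def CZoneStep {n : ℕ} (hp : HalfPeriod n) (k t : ℕ) : Prop :=
  ∃ p, n - k ≤ p ∧ hp.GateAt t p

/-- At step `t`, element `z` moves from position `p` to position `q` for the first time. -/
def FirstMove {n : ℕ} (hp : HalfPeriod n) (t : ℕ) (z : Fin n) (p q : ℕ) : Prop :=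
  hp.pos t z = p ∧ hp.pos (t + 1) z = q ∧
    ∀ s < t, ¬ (hp.pos s z = p ∧ hp.pos (s + 1) z = q)

/-- Step `t` is a discovery transposition for the element `z`: for some `1 ≤ i ≤ j`,
`z` is `a_j` (resp. `c_j`) and `z` exits its compulsory exit-gate (the `i`-th `A`-gate,
resp. the `i`-th `C`-gate) or enters its compulsory entry-gate (the `i`-th `C`-gate,
resp. the `i`-th `A`-gate) for the first time. The `i`-th `A`-gate is the pair of
positions `(k-i+1, k-i+2)` and the `i`-th `C`-gate is `(n-k+i-1, n-k+i)`. -/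
def DiscoveryFor {n : ℕ} (hp : HalfPeriod n) (k : ℕ) (a c : Fin k → Fin n)
    (t : ℕ) (z : Fin n) : Prop :=
  ∃ i : ℕ, 1 ≤ i ∧
    ((∃ j : Fin k, z = a j ∧ i ≤ (j : ℕ) + 1 ∧
       (FirstMove hp t z (k - i + 1) (k - i + 2) ∨
        FirstMove hp t z (n - k + i - 1) (n - k + i))) ∨
     (∃ j : Fin k, z = c j ∧ i ≤ (j : ℕ) + 1 ∧
       (FirstMove hp t z (k - i + 2) (k - i + 1) ∨
        FirstMove hp t z (n - k + i) (n - k + i - 1))))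

/-- Step `t` is a double-discovery transposition. -/
def DoubleDiscoveryAt {n : ℕ} (hp : HalfPeriod n) (k : ℕ) (a c : Fin k → Fin n)
    (t : ℕ) : Prop :=
  ∃ x y, hp.SwapsAt t x y ∧ DiscoveryFor hp k a c t x ∧ DiscoveryFor hp k a c t y

/-- `|T(a_{i+1})|`: the number of `c`'s that become free after `a_{i+1}` does. -/
noncomputable def TCardA {n : ℕ} (hp : HalfPeriod n) (k : ℕ) (a c : Fin k → Fin n)
    (i : Fin k) : ℕ :=
  {l : Fin k | ∃ u v, AFreedAt hp k (a i) u ∧ CFreedAt hp k (c l) v ∧ u < v}.ncard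

/-- `|T(c_{i+1})|`: the number of `a`'s that become free after `c_{i+1}` does. -/
noncomputable def TCardC {n : ℕ} (hp : HalfPeriod n) (k : ℕ) (a c : Fin k → Fin n)
    (i : Fin k) : ℕ :=
  {l : Fin k | ∃ u v, CFreedAt hp k (c i) u ∧ AFreedAt hp k (a l) v ∧ u < v}.ncard

/-- The half-period is perfect: it has no confined transpositions, every transposition
in the `A`-Zone or `C`-Zone is a discovery transposition, each `a_{i+1}` is involved in
exactly `min (i+1) |T(a_{i+1})|` double-discovery transpositions in the `C`-Zone, and
each `c_{i+1}` is involved in exactly `min (i+1) |T(c_{i+1})|` double-discovery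
transpositions in the `A`-Zone. -/
def PerfectHalfPeriod {n : ℕ} (hp : HalfPeriod n) (k : ℕ) (a c : Fin k → Fin n) : Prop :=
  NoConfinedSteps hp k a c ∧
  (∀ t, t < HalfPeriod.steps n → (AZoneStep hp k t ∨ CZoneStep hp k t) →
    ∃ z, hp.Moved t z ∧ DiscoveryFor hp k a c t z) ∧
  (∀ i : Fin k,
    {t : ℕ | t < HalfPeriod.steps n ∧ CZoneStep hp k t ∧ hp.Moved t (a i) ∧
      DoubleDiscoveryAt hp k a c t}.ncard = min ((i : ℕ) + 1) (TCardA hp k a c i)) ∧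
  (∀ i : Fin k,
    {t : ℕ | t < HalfPeriod.steps n ∧ AZoneStep hp k t ∧ hp.Moved t (c i) ∧
      DoubleDiscoveryAt hp k a c t}.ncard = min ((i : ℕ) + 1) (TCardC hp k a c i))

namespace Pf

theorem ivt (p : ℕ → Prop) (s e : ℕ) (hse : s ≤ e) (hs : p s) (he : ¬ p e) :
    ∃ u, s ≤ u ∧ u < e ∧ (∀ w, s ≤ w → w ≤ u → p w) ∧ ¬ p (u + 1) := by
  classical
  have hex : ∃ m, ¬ p (s + m) := ⟨e - s, by rwa [Nat.add_sub_cancel' hse]⟩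
  have h1 := Nat.find_spec hex
  have h2 : ∀ m < Nat.find hex, p (s + m) := fun m hm => by
    have := Nat.find_min hex hm
    simpa using this
  have h3 : Nat.find hex ≤ e - s := Nat.find_min' hex (by rwa [Nat.add_sub_cancel' hse])
  have h0 : Nat.find hex ≠ 0 := by
    intro h
    rw [h] at h1
    exact h1 hs
  refine ⟨s + (Nat.find hex - 1), by omega, by omega, ?_, ?_⟩
  · intro w hw1 hw2
    have := h2 (w - s) (by omega)
    rwa [Nat.add_sub_cancel' hw1] at this
  · have : s + (Nat.find hex - 1) + 1 = s + Nat.find hex := by omega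
    rwa [this]

theorem card_exists {k : ℕ} (A : Finset ℕ) (Q : Fin k → ℕ → Prop)
    (hex : ∀ i j t, Q i t → Q j t → i = j) [∀ i, DecidablePred (Q i)]
    [DecidablePred fun t => ∃ j, Q j t] :
    (A.filter (fun t => ∃ j, Q j t)).card = ∑ j, (A.filter (Q j)).card := by
  classical
  rw [← Finset.card_biUnion]
  · congr 1
    ext t
    simp
  · intro i _ j _ hij
    simp only [Function.onFun]
    rw [Finset.disjoint_left]
    intro t h1 h2
    simp at h1 h2
    exact hij (hex _ _ _ h1.2 h2.2)

variable {n : ℕ}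

abbrev NN (n : ℕ) : ℕ := n * (n - 1) / 2

def P (S : AllowableSeq n) (t : ℕ) (x : Fin n) : ℕ := S.pos (t : ℤ) x

theorem P_step (S : AllowableSeq n) (t : ℕ) : ∃ x y : Fin n,
    P S t y = P S t x + 1 ∧ P S (t + 1) x = P S t x + 1 ∧ P S (t + 1) y = P S t x ∧
    ∀ z, z ≠ x → z ≠ y → P S (t + 1) z = P S t z := by
  have := S.step (t : ℤ)
  simpa [P] using this

noncomputable def rm (S : AllowableSeq n) (t : ℕ) : Fin n := (P_step S t).choose
noncomputable def lm (S : AllowableSeq n) (t : ℕ) : Fin n := (P_step S t).choose_spec.choose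
noncomputable def g (S : AllowableSeq n) (t : ℕ) : ℕ := P S t (rm S t)

variable (S : AllowableSeq n)

theorem P_rm (t : ℕ) : P S t (rm S t) = g S t := rfl
theorem P_lm (t : ℕ) : P S t (lm S t) = g S t + 1 := (P_step S t).choose_spec.choose_spec.1
theorem P_rm' (t : ℕ) : P S (t+1) (rm S t) = g S t + 1 := (P_step S t).choose_spec.choose_spec.2.1
theorem P_lm' (t : ℕ) : P S (t+1) (lm S t) = g S t := (P_step S t).choose_spec.choose_spec.2.2.1
theorem P_other (t : ℕ) (z : Fin n) (h1 : z ≠ rm S t) (h2 : z ≠ lm S t) :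
    P S (t+1) z = P S t z := (P_step S t).choose_spec.choose_spec.2.2.2 z h1 h2
theorem P_inj (t : ℕ) {x y : Fin n} (h : P S t x = P S t y) : x = y := S.pos_inj t h
theorem P_pos (t : ℕ) (x : Fin n) : 1 ≤ P S t x := (S.pos_mem t x).1
theorem P_le (t : ℕ) (x : Fin n) : P S t x ≤ n := (S.pos_mem t x).2
theorem P_rev (t : ℕ) (x : Fin n) : P S (t + NN n) x = n + 1 - P S t x := by
  have := S.reverse t x
  simpa [P, NN] using this
theorem P_end (x : Fin n) : P S (NN n) x = n + 1 - P S 0 x := by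
  have := P_rev S 0 x
  simpa using this
theorem rm_ne_lm (t : ℕ) : rm S t ≠ lm S t := by
  intro h
  have := P_lm S t
  rw [← h, P_rm] at this
  omega
theorem g_pos (t : ℕ) : 1 ≤ g S t := P_pos S t _
theorem g_lt (t : ℕ) : g S t < n := by
  have := P_le S t (lm S t)
  rw [P_lm] at this
  omega

theorem step_cases (t : ℕ) (z : Fin n) :
    (z = rm S t ∧ P S t z = g S t ∧ P S (t+1) z = g S t + 1) ∨
    (z = lm S t ∧ P S t z = g S t + 1 ∧ P S (t+1) z = g S t) ∨
    (z ≠ rm S t ∧ z ≠ lm S t ∧ P S (t+1) z = P S t z) := by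
  by_cases h1 : z = rm S t
  · left
    subst h1
    exact ⟨rfl, rfl, P_rm' S t⟩
  by_cases h2 : z = lm S t
  · right; left
    subst h2
    exact ⟨rfl, P_lm S t, P_lm' S t⟩
  · exact Or.inr (Or.inr ⟨h1, h2, P_other S t z h1 h2⟩)

theorem rm_uniq {t : ℕ} {z : Fin n} (h : P S t z < P S (t+1) z) :
    rm S t = z ∧ g S t = P S t z := by
  rcases step_cases S t z with h' | h' | h'
  · exact ⟨h'.1.symm, h'.2.1.symm⟩
  · omega
  · omega

theorem lm_uniq {t : ℕ} {z : Fin n} (h : P S (t+1) z < P S t z) :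
    lm S t = z ∧ g S t + 1 = P S t z := by
  rcases step_cases S t z with h' | h' | h'
  · omega
  · exact ⟨h'.1.symm, h'.2.1.symm⟩
  · omega

theorem crossR {s e q : ℕ} {x : Fin n} (hse : s ≤ e) (hs : P S s x ≤ q) (he : q < P S e x) :
    ∃ u, s ≤ u ∧ u < e ∧ rm S u = x ∧ g S u = q ∧ ∀ w, s ≤ w → w ≤ u → P S w x ≤ q := by
  obtain ⟨u, h1, h2, h3, h4⟩ := ivt (fun t => P S t x ≤ q) s e hse hs (by omega)
  have h5 := h3 u h1 le_rfl
  obtain ⟨h6, h7⟩ := rm_uniq S (t := u) (z := x) (by omega)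
  rcases step_cases S u x with h' | h' | h'
  · exact ⟨u, h1, h2, h6, by omega, h3⟩
  · omega
  · omega

theorem crossL {s e q : ℕ} {x : Fin n} (hse : s ≤ e) (hs : q < P S s x) (he : P S e x ≤ q) :
    ∃ u, s ≤ u ∧ u < e ∧ lm S u = x ∧ g S u = q ∧ ∀ w, s ≤ w → w ≤ u → q < P S w x := by
  obtain ⟨u, h1, h2, h3, h4⟩ := ivt (fun t => q < P S t x) s e hse hs (by omega)
  have h5 := h3 u h1 le_rfl
  obtain ⟨h6, h7⟩ := lm_uniq S (t := u) (z := x) (by omega)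
  rcases step_cases S u x with h' | h' | h'
  · omega
  · exact ⟨u, h1, h2, h6, by omega, h3⟩
  · omega

theorem order_change {t : ℕ} {x y : Fin n} (h1 : P S t x < P S t y) (h2 : P S (t+1) y ≤ P S (t+1) x) :
    rm S t = x ∧ lm S t = y := by
  have hxy : x ≠ y := by rintro rfl; omega
  have h3 : P S (t+1) y ≠ P S (t+1) x := fun h => hxy (P_inj S _ h).symm
  have h4 : P S t x ≠ P S t y := by omega
  rcases step_cases S t x with h' | h' | h' <;> rcases step_cases S t y with h'' | h'' | h''
  · omega
  · exact ⟨h'.1.symm, h''.1.symm⟩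
  · exfalso
    have : P S t y ≠ P S t (lm S t) := fun h => h''.2.1 (P_inj S _ h)
    rw [P_lm] at this
    omega
  · omega
  · omega
  · omega
  · omega
  · exfalso
    have : P S t x ≠ P S t (rm S t) := fun h => h'.1 (P_inj S _ h)
    rw [P_rm] at this
    omega
  · omega

theorem flip {s e : ℕ} {x y : Fin n} (hse : s ≤ e) (hs : P S s x < P S s y)
    (he : P S e y < P S e x) : ∃ u, s ≤ u ∧ u < e ∧ rm S u = x ∧ lm S u = y := by
  obtain ⟨u, h1, h2, h3, h4⟩ := ivt (fun t => P S t x < P S t y) s e hse hs (by omega)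
  have := order_change S (h3 u h1 le_rfl) (by omega)
  exact ⟨u, h1, h2, this⟩

theorem card_lt (f : Fin n → ℕ) (hf : Function.Injective f) :
    (Finset.univ.filter (fun p : Fin n × Fin n => f p.1 < f p.2)).card = NN n := by
  have h1 : (Finset.univ.filter (fun p : Fin n × Fin n => f p.1 < f p.2)).card =
      (Finset.univ.filter (fun p : Fin n × Fin n => f p.2 < f p.1)).card := by
    apply Finset.card_bij (fun p _ => (p.2, p.1))
    · intro p hp
      simpa using hp
    · rintro ⟨a, b⟩ _ ⟨c, d⟩ _ h
      simp at h ⊢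
      tauto
    · rintro ⟨a, b⟩ h
      exact ⟨(b, a), by simpa using h, rfl⟩
  have h2 : (Finset.univ.filter (fun p : Fin n × Fin n => f p.1 < f p.2)) ∪
      (Finset.univ.filter (fun p : Fin n × Fin n => f p.2 < f p.1)) =
      (Finset.univ : Finset (Fin n)).offDiag := by
    ext ⟨a, b⟩
    simp only [Finset.mem_union, Finset.mem_filter, Finset.mem_univ, true_and, Finset.mem_offDiag]
    constructor
    · rintro h rfl
      omega
    · intro h
      have : f a ≠ f b := fun h' => h (hf h')
      omega
  have h3 := congrArg Finset.card h2
  rw [Finset.card_union_of_disjoint, Finset.offDiag_card, ← h1] at h3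
  · simp only [Finset.card_univ, Fintype.card_fin] at h3
    have : n * (n - 1) = n * n - n := by rw [Nat.mul_sub, mul_one]
    unfold NN
    omega
  · rw [Finset.disjoint_left]
    intro p hp hp'
    simp at hp hp'
    omega

theorem good {t : ℕ} (ht : t < NN n) : P S 0 (rm S t) < P S 0 (lm S t) := by
  classical
  let I : ℕ → Finset (Fin n × Fin n) := fun t =>
    Finset.univ.filter (fun p => P S 0 p.1 < P S 0 p.2 ∧ P S t p.2 < P S t p.1)
  have hI0 : (I 0).card = 0 := by
    rw [Finset.card_eq_zero, Finset.filter_eq_empty_iff]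
    intro p _
    omega
  have hIN : (I (NN n)).card = NN n := by
    refine Eq.trans ?_ (card_lt (P S 0) (fun x y h => P_inj S 0 h))
    congr 1
    ext p
    simp only [I, Finset.mem_filter, Finset.mem_univ, true_and, P_end]
    have := P_le S 0 p.1
    have := P_le S 0 p.2
    omega
  have hstep : ∀ t, (I (t+1)).card ≤ (I t).card + if P S 0 (rm S t) < P S 0 (lm S t) then 1 else 0 := by
    intro t
    have key : ∀ p ∈ I (t+1), p ∈ I t ∨ (P S 0 (rm S t) < P S 0 (lm S t) ∧ p = (rm S t, lm S t)) := by
      rintro ⟨x, y⟩ hp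
      simp only [I, Finset.mem_filter, Finset.mem_univ, true_and] at hp ⊢
      by_cases h : P S t y < P S t x
      · left; exact ⟨hp.1, h⟩
      · right
        have hxy : P S t x ≠ P S t y := fun h => by
          have := P_inj S _ h
          subst this
          omega
        have := order_change S (t := t) (x := x) (y := y) (by omega) (by omega)
        rw [this.1, this.2]
        exact ⟨hp.1, rfl⟩
    split_ifs with h
    · refine le_trans (Finset.card_le_card (t := insert (rm S t, lm S t) (I t)) ?_)
        (Finset.card_insert_le _ _)
      intro p hp
      rw [Finset.mem_insert]
      rcases key p hp with h' | h'
      · exact Or.inr h'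
      · exact Or.inl h'.2
    · refine Finset.card_le_card ?_
      intro p hp
      rcases key p hp with h' | h'
      · exact h'
      · exact absurd h'.1 h
  have hsum : ∀ m, (I m).card ≤ ((Finset.range m).filter (fun t => P S 0 (rm S t) < P S 0 (lm S t))).card := by
    intro m
    induction m with
    | zero => simp [hI0]
    | succ m ih =>
      have := hstep m
      rw [Finset.range_add_one, Finset.filter_insert]
      split_ifs at this ⊢ with h
      · rw [Finset.card_insert_of_notMem (by simp)]
        omega
      · omega
  have h1 := hsum (NN n)
  rw [hIN] at h1
  have h2 : (Finset.range (NN n)).filter (fun t => P S 0 (rm S t) < P S 0 (lm S t)) = Finset.range (NN n) := by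
    apply Finset.eq_of_subset_of_card_le (Finset.filter_subset _ _)
    simpa using h1
  have h3 : t ∈ (Finset.range (NN n)).filter (fun t => P S 0 (rm S t) < P S 0 (lm S t)) := by
    rw [h2]; simpa using ht
  exact (Finset.mem_filter.1 h3).2

theorem swap_once {t u : ℕ} (ht : t < NN n) (hu : u < NN n) (h1 : rm S t = rm S u)
    (h2 : lm S t = lm S u) : t = u := by
  have key : ∀ t u : ℕ, u < NN n → rm S t = rm S u → lm S t = lm S u → ¬ t < u := by
    intro t u hu h1 h2 h
    obtain ⟨w, w1, w2, w3, w4⟩ := flip S (s := t+1) (e := u) (x := lm S t) (y := rm S t) h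
      (by rw [P_lm', P_rm']; omega) (by rw [h1, h2, P_lm, P_rm]; omega)
    have g1 := good S hu
    have g2 := good S (t := w) (by omega)
    rw [w3, w4, h1, h2] at g2
    omega
  have := key t u hu h1 h2
  have := key u t ht h1.symm h2.symm
  omega

/-! clean predicates -/

def InG (n k j q : ℕ) : Prop := (k - j ≤ q ∧ q ≤ k) ∨ (n - k ≤ q ∧ q ≤ n - k + j)

def DA (k : ℕ) (a : Fin k → Fin n) (j : Fin k) (t : ℕ) : Prop :=
  rm S t = a j ∧ InG n k j (g S t) ∧ ∀ s ≤ t, P S s (a j) ≤ g S t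

def DC (k : ℕ) (c : Fin k → Fin n) (j : Fin k) (t : ℕ) : Prop :=
  lm S t = c j ∧ InG n k j (g S t) ∧ ∀ s ≤ t, g S t < P S s (c j)

structure Start (k : ℕ) (a c : Fin k → Fin n) : Prop where
  hk : 2 * k < n
  ha : ∀ i, P S 0 (a i) = k - (i : ℕ)
  hc : ∀ i, P S 0 (c i) = n - k + (i : ℕ) + 1

noncomputable def fa (k : ℕ) (x : Fin n) : ℕ := sInf {t | k < P S t x}
noncomputable def fc (k : ℕ) (x : Fin n) : ℕ := sInf {t | P S t x ≤ n - k}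

open Classical in
noncomputable def TA (k : ℕ) (a c : Fin k → Fin n) (i : Fin k) : ℕ :=
  (Finset.univ.filter (fun l => fa S k (a i) < fc S k (c l))).card
open Classical in
noncomputable def TC (k : ℕ) (a c : Fin k → Fin n) (i : Fin k) : ℕ :=
  (Finset.univ.filter (fun l => fc S k (c i) < fa S k (a l))).card

open Classical in
noncomputable def dblC (k : ℕ) (a c : Fin k → Fin n) (i : Fin k) : ℕ :=
  ((Finset.range (NN n)).filter (fun t => n - k ≤ g S t ∧ DA S k a i t ∧ ∃ l, DC S k c l t)).card
open Classical in
noncomputable def dblA (k : ℕ) (a c : Fin k → Fin n) (i : Fin k) : ℕ :=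
  ((Finset.range (NN n)).filter (fun t => g S t ≤ k ∧ DC S k c i t ∧ ∃ l, DA S k a l t)).card

structure NoConf (k : ℕ) (a c : Fin k → Fin n) : Prop where
  na : ∀ t < NN n, ∀ i j, rm S t = a i → lm S t = a j → (∀ s ≤ t, P S s (a i) ≤ k) →
    (∀ s ≤ t, P S s (a j) ≤ k) → False
  nc : ∀ t < NN n, ∀ i j, rm S t = c i → lm S t = c j → (∀ s ≤ t, n - k < P S s (c i)) →
    (∀ s ≤ t, n - k < P S s (c j)) → False

structure CPerf (k : ℕ) (a c : Fin k → Fin n) : Prop where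
  nconf : NoConf S k a c
  disc : ∀ t < NN n, (g S t ≤ k ∨ n - k ≤ g S t) → (∃ j, DA S k a j t) ∨ (∃ j, DC S k c j t)
  cA : ∀ i, dblC S k a c i = min ((i : ℕ) + 1) (TA S k a c i)
  cC : ∀ i, dblA S k a c i = min ((i : ℕ) + 1) (TC S k a c i)

/-! mirror and shift -/

def mir : AllowableSeq n where
  pos t x := n + 1 - S.pos t x
  pos_mem t x := by have := S.pos_mem t x; omega
  pos_inj t x y h := by
    have := S.pos_mem t x
    have := S.pos_mem t y
    exact S.pos_inj t (by simp only at h; omega)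
  step t := by
    obtain ⟨x, y, h1, h2, h3, h4⟩ := S.step t
    have := S.pos_mem t x
    have := S.pos_mem t y
    exact ⟨y, x, by omega, by omega, by omega, fun z hz1 hz2 => by rw [h4 z hz2 hz1]⟩
  reverse t x := by
    have := S.pos_mem t x
    rw [S.reverse t x]

def shift (τ : ℤ) : AllowableSeq n where
  pos t x := S.pos (τ + t) x
  pos_mem t x := S.pos_mem _ x
  pos_inj t := S.pos_inj _
  step t := by
    have := S.step (τ + t)
    simpa [add_assoc] using this
  reverse t x := by
    have := S.reverse (τ + t) x
    rw [← this, add_assoc]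

theorem P_mir (t : ℕ) (x : Fin n) : P (mir S) t x = n + 1 - P S t x := rfl

theorem mir_mir : mir (mir S) = S := by
  have : (mir (mir S)).pos = S.pos := by
    funext t x
    have := S.pos_mem t x
    show n + 1 - (n + 1 - S.pos t x) = S.pos t x
    omega
  cases S
  simp only [mir] at this ⊢
  congr

theorem rg_mir (t : ℕ) : rm (mir S) t = lm S t ∧ g (mir S) t = n - g S t := by
  have h1 := P_lm S t
  have h2 := P_lm' S t
  have h3 := g_lt S t
  have := rm_uniq (mir S) (t := t) (z := lm S t) (by rw [P_mir, P_mir]; omega)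
  rw [P_mir] at this
  exact ⟨this.1, by omega⟩

theorem lm_mir (t : ℕ) : lm (mir S) t = rm S t := by
  have h1 := P_rm S t
  have h2 := P_rm' S t
  have h3 := g_lt S t
  exact (lm_uniq (mir S) (t := t) (z := rm S t) (by rw [P_mir, P_mir]; omega)).1

theorem P_shift (τ t : ℕ) (x : Fin n) : P (shift S τ) t x = P S (τ + t) x := by
  simp [P, shift]

theorem rm_shift (τ t : ℕ) : rm (shift S τ) t = rm S (τ + t) ∧ g (shift S τ) t = g S (τ + t) := by
  have h1 := P_rm S (τ + t)
  have h2 := P_rm' S (τ + t)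
  have := rm_uniq (shift S τ) (t := t) (z := rm S (τ + t))
    (by rw [P_shift, P_shift, ← add_assoc]; omega)
  rw [P_shift] at this
  exact ⟨this.1, by omega⟩

theorem lm_shift (τ t : ℕ) : lm (shift S τ) t = lm S (τ + t) := by
  have h1 := P_lm S (τ + t)
  have h2 := P_lm' S (τ + t)
  exact (lm_uniq (shift S τ) (t := t) (z := lm S (τ + t))
    (by rw [P_shift, P_shift, ← add_assoc]; omega)).1

theorem g_per (t : ℕ) : g S (t + NN n) = n - g S t := by
  have h1 := P_lm S t
  have h2 := P_lm' S t
  have h3 := g_lt S t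
  have h4 := P_rev S t (lm S t)
  have h5 := P_rev S (t+1) (lm S t)
  rw [show t + 1 + NN n = t + NN n + 1 by omega] at h5
  have := rm_uniq S (t := t + NN n) (z := lm S t) (by omega)
  omega

variable {S} {k : ℕ} {a c : Fin k → Fin n}

theorem Start.mir (h : Start S k a c) : Start (mir S) k c a := by
  have := h.hk
  refine ⟨h.hk, fun i => ?_, fun i => ?_⟩
  · rw [P_mir, h.hc]; omega
  · rw [P_mir, h.ha]; omega

theorem InG_mir {j q : ℕ} (hk : 2 * k < n) (hj : j < k) (hq : q < n) (hq' : 1 ≤ q) :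
    InG n k j (n - q) ↔ InG n k j q := by
  unfold InG
  omega

theorem DA_mir (hk : 2 * k < n) (j : Fin k) (t : ℕ) : DA (mir S) k c j t ↔ DC S k c j t := by
  unfold DA DC
  have h1 := g_lt S t
  have h2 := g_pos S t
  rw [(rg_mir S t).1, (rg_mir S t).2, InG_mir hk j.2 h1 h2]
  have : ∀ s, P (mir S) s (c j) ≤ n - g S t ↔ g S t < P S s (c j) := fun s => by
    rw [P_mir]; have := P_le S s (c j); omega
  simp only [this]

theorem DC_mir (hk : 2 * k < n) (j : Fin k) (t : ℕ) : DC (mir S) k a j t ↔ DA S k a j t := by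
  have := DA_mir (S := mir S) (c := a) hk j t
  rw [mir_mir] at this
  exact this.symm

theorem fa_mir (hk : 2 * k < n) (x : Fin n) : fa (mir S) k x = fc S k x := by
  unfold fa fc
  congr 1
  ext t
  simp only [Set.mem_ofPred_eq, P_mir]
  have := P_le S t x
  omega

theorem fc_mir (hk : 2 * k < n) (x : Fin n) : fc (mir S) k x = fa S k x := by
  have := fa_mir (S := mir S) hk x
  rw [mir_mir] at this
  exact this.symm

theorem TA_mir (hk : 2 * k < n) (i) : TA (mir S) k c a i = TC S k a c i := by
  unfold TA TC
  simp only [fa_mir hk, fc_mir hk]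

theorem TC_mir (hk : 2 * k < n) (i) : TC (mir S) k c a i = TA S k a c i := by
  unfold TA TC
  simp only [fa_mir hk, fc_mir hk]

theorem dblC_mir (hk : 2 * k < n) (i) : dblC (mir S) k c a i = dblA S k a c i := by
  unfold dblC dblA
  congr 1
  ext t
  have h1 := g_lt S t
  simp only [Finset.mem_filter, DA_mir hk, DC_mir hk, (rg_mir S t).2]
  have : n - k ≤ n - g S t ↔ g S t ≤ k := by omega
  rw [this]

theorem dblA_mir (hk : 2 * k < n) (i) : dblA (mir S) k c a i = dblC S k a c i := by
  have := dblC_mir (S := mir S) (a := c) (c := a) hk i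
  rw [mir_mir] at this
  exact this.symm

theorem NoConf.mir (hk : 2 * k < n) (h : NoConf S k a c) : NoConf (mir S) k c a := by
  constructor
  · intro t ht i j h1 h2 h3 h4
    rw [(rg_mir S t).1] at h1
    rw [lm_mir S t] at h2
    refine h.nc t ht j i h2 h1 (fun s hs => ?_) (fun s hs => ?_)
    · have := h4 s hs
      rw [P_mir] at this; have := P_le S s (c j); omega
    · have := h3 s hs
      rw [P_mir] at this; have := P_le S s (c i); omega
  · intro t ht i j h1 h2 h3 h4
    rw [(rg_mir S t).1] at h1
    rw [lm_mir S t] at h2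
    refine h.na t ht j i h2 h1 (fun s hs => ?_) (fun s hs => ?_)
    · have := h4 s hs
      rw [P_mir] at this; have := P_le S s (a j); omega
    · have := h3 s hs
      rw [P_mir] at this; have := P_le S s (a i); omega

theorem CPerf.mir (hk : 2 * k < n) (h : CPerf S k a c) : CPerf (mir S) k c a := by
  refine ⟨h.nconf.mir hk, fun t ht hz => ?_, fun i => ?_, fun i => ?_⟩
  · simp only [DA_mir hk, DC_mir hk]
    have h1 := g_lt S t
    rw [(rg_mir S t).2] at hz
    exact (h.disc t ht (by omega)).symm
  · rw [dblC_mir hk, TA_mir hk, h.cC]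
  · rw [dblA_mir hk, TC_mir hk, h.cA]

/-! counting -/

theorem Start.a_inj (h : Start S k a c) {i j : Fin k} (hij : a i = a j) : i = j := by
  have h1 := h.ha i
  have h2 := h.ha j
  rw [hij] at h1
  ext
  omega

theorem Start.c_inj (h : Start S k a c) {i j : Fin k} (hij : c i = c j) : i = j :=
  h.mir.a_inj hij

theorem Start.ea (h : Start S k a c) (i : Fin k) : P S (NN n) (a i) = n - k + i + 1 := by
  have := h.hk
  rw [P_end, h.ha]; omega

theorem Start.ec (h : Start S k a c) (i : Fin k) : P S (NN n) (c i) = k - i := by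
  have := h.hk
  rw [P_end, h.hc]; omega

theorem Start.fa_spec (h : Start S k a c) (i : Fin k) :
    k < P S (fa S k (a i)) (a i) ∧ fa S k (a i) ≤ NN n := by
  have hk := h.hk
  have hN : NN n ∈ {t | k < P S t (a i)} := by
    show k < P S (NN n) (a i)
    rw [h.ea]; omega
  exact ⟨Nat.sInf_mem (s := {t | k < P S t (a i)}) ⟨_, hN⟩, Nat.sInf_le hN⟩

theorem fa_min {s : ℕ} {x : Fin n} (hs : s < fa S k x) : P S s x ≤ k := by
  have := Nat.notMem_of_lt_sInf hs
  simpa using this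

theorem fa_le {s : ℕ} {x : Fin n} (hs : k < P S s x) : fa S k x ≤ s := by
  by_contra h
  have := fa_min (S := S) (k := k) (x := x) (s := s) (by omega)
  omega

theorem Start.lt_fa (h : Start S k a c) {i : Fin k} {t : ℕ} (ht : ∀ s ≤ t, P S s (a i) ≤ k) :
    t < fa S k (a i) := by
  by_contra h'
  have h1 := ht (fa S k (a i)) (by omega)
  have h2 := (h.fa_spec i).1
  omega

theorem Start.fc_spec (h : Start S k a c) (i : Fin k) :
    P S (fc S k (c i)) (c i) ≤ n - k ∧ fc S k (c i) ≤ NN n := by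
  have := h.mir.fa_spec i
  rw [fa_mir h.hk, P_mir] at this
  omega

theorem fc_min {s : ℕ} {x : Fin n} (hs : s < fc S k x) : n - k < P S s x := by
  have := Nat.notMem_of_lt_sInf hs
  simpa using this

theorem fc_le {s : ℕ} {x : Fin n} (hs : P S s x ≤ n - k) : fc S k x ≤ s := by
  by_contra h
  have := fc_min (S := S) (k := k) (x := x) (s := s) (by omega)
  omega

theorem Start.lt_fc (h : Start S k a c) {i : Fin k} {t : ℕ} (ht : ∀ s ≤ t, n - k < P S s (c i)) :
    t < fc S k (c i) := by
  by_contra h'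
  have h1 := ht (fc S k (c i)) (by omega)
  have h2 := (h.fc_spec i).1
  omega

theorem Start.fa_ne_fc (h : Start S k a c) (i j : Fin k) : fa S k (a i) ≠ fc S k (c j) := by
  intro he
  have hk := h.hk
  have h1 := (h.fa_spec i).1
  have h2 := (h.fc_spec j).1
  have h3 := h.ha i
  have h4 := h.hc j
  rw [← he] at h2
  rcases Nat.eq_zero_or_pos (fa S k (a i)) with h0 | h0
  · rw [h0] at h1; omega
  obtain ⟨u, hu⟩ : ∃ u, fa S k (a i) = u + 1 := ⟨fa S k (a i) - 1, by omega⟩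
  have h5 := fa_min (S := S) (k := k) (x := a i) (s := u) (by omega)
  have h6 := fc_min (S := S) (k := k) (x := c j) (s := u) (by omega)
  rw [hu] at h1 h2
  have h7 := rm_uniq S (t := u) (z := a i) (by omega)
  have h8 := lm_uniq S (t := u) (z := c j) (by omega)
  omega

theorem Start.fa_mono (h : Start S k a c) (hn : NoConf S k a c) {i j : Fin k} (hij : i < j) :
    fa S k (a i) < fa S k (a j) := by
  by_contra hlt
  have hk := h.hk
  have h1 := h.fa_spec j
  have h3 := h.ha i
  have h4 := h.ha j
  have hij' : (i : ℕ) < j := hij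
  rcases Nat.eq_zero_or_pos (fa S k (a j)) with h0 | h0
  · rw [h0] at h1; omega
  obtain ⟨u, hu⟩ : ∃ u, fa S k (a j) = u + 1 := ⟨fa S k (a j) - 1, by omega⟩
  have h5 := fa_min (S := S) (k := k) (x := a j) (s := u) (by omega)
  have h6 := fa_min (S := S) (k := k) (x := a i) (s := u) (by omega)
  rw [hu] at h1
  have h7 := rm_uniq S (t := u) (z := a j) (by omega)
  have h8 := P_rm' S u
  rw [h7.1] at h8
  have hne : P S u (a i) ≠ P S u (a j) := fun he => by
    have := h.a_inj (P_inj S _ he); omega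
  obtain ⟨w, w1, w2, w3, w4⟩ := flip S (s := 0) (e := u) (x := a j) (y := a i) (by omega)
    (by omega) (by omega)
  exact hn.na w (by omega) j i w3 w4 (fun s hs => fa_min (by omega)) (fun s hs => fa_min (by omega))

theorem Start.fc_mono (h : Start S k a c) (hn : NoConf S k a c) {i j : Fin k} (hij : i < j) :
    fc S k (c i) < fc S k (c j) := by
  have := h.mir.fa_mono (hn.mir h.hk) hij
  rwa [fa_mir h.hk, fa_mir h.hk] at this

theorem Start.DA_excl (h : Start S k a c) {i j : Fin k} {t : ℕ} (h1 : DA S k a i t)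
    (h2 : DA S k a j t) : i = j := h.a_inj (h1.1.symm.trans h2.1)
theorem Start.DC_excl (h : Start S k a c) {i j : Fin k} {t : ℕ} (h1 : DC S k c i t)
    (h2 : DC S k c j t) : i = j := h.c_inj (h1.1.symm.trans h2.1)

theorem DA_zone {j : Fin k} {t : ℕ} (h : DA S k a j t) : g S t ≤ k ∨ n - k ≤ g S t := by
  have := h.2.1
  unfold InG at this
  omega
theorem DC_zone {j : Fin k} {t : ℕ} (h : DC S k c j t) : g S t ≤ k ∨ n - k ≤ g S t := by
  have := h.2.1
  unfold InG at this
  omega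

open Classical in
theorem Start.cardG (h : Start S k a c) (j : Fin k) (G : Finset ℕ) (hG : ∀ q ∈ G, InG n k j q) :
    ((Finset.range (NN n)).filter (fun t => DA S k a j t ∧ g S t ∈ G)).card = G.card := by
  have hk := h.hk
  apply Finset.card_bij (fun t _ => g S t)
  · intro t ht
    exact (Finset.mem_filter.1 ht).2.2
  · have key : ∀ t u, DA S k a j t → DA S k a j u → g S t = g S u → ¬ t < u := by
      intro t u h1 h2 h3 h4
      have := h2.2.2 (t+1) h4
      rw [← h1.1, P_rm'] at this
      omega
    intro t ht u hu htu
    simp only [Finset.mem_filter] at ht hu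
    have := key t u ht.2.1 hu.2.1 htu
    have := key u t hu.2.1 ht.2.1 htu.symm
    omega
  · intro q hq
    have h1 := hG q hq
    have h2 := h.ha j
    have h3 := h.ea j
    have h4 := j.2
    have h1' := h1
    unfold InG at h1'
    obtain ⟨u, _, u2, u3, u4, u5⟩ := crossR S (s := 0) (e := NN n) (q := q) (x := a j) (by omega)
      (by omega) (by omega)
    refine ⟨u, ?_, u4⟩
    simp only [Finset.mem_filter, Finset.mem_range]
    exact ⟨u2, ⟨u3, by rwa [u4], fun s hs => by rw [u4]; exact u5 s (by omega) hs⟩, by rwa [u4]⟩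

open Classical in
theorem Start.cardDA_A (h : Start S k a c) (j : Fin k) :
    ((Finset.range (NN n)).filter (fun t => DA S k a j t ∧ g S t ≤ k)).card = j + 1 := by
  have h1 := h.cardG j (Finset.Icc (k - j) k) (fun q hq => Or.inl (by simpa using hq))
  rw [Nat.card_Icc] at h1
  rw [show (j : ℕ) + 1 = k + 1 - (k - j) by omega, ← h1]
  congr 1
  ext t
  simp only [Finset.mem_filter, Finset.mem_Icc]
  have hk := h.hk
  constructor
  · rintro ⟨h1, h2, h3⟩
    refine ⟨h1, h2, ?_⟩
    have := h2.2.1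
    unfold InG at this
    omega
  · rintro ⟨h1, h2, h3⟩
    exact ⟨h1, h2, h3.2⟩

open Classical in
theorem Start.cardDA_C (h : Start S k a c) (j : Fin k) :
    ((Finset.range (NN n)).filter (fun t => DA S k a j t ∧ n - k ≤ g S t)).card = j + 1 := by
  have h1 := h.cardG j (Finset.Icc (n - k) (n - k + j)) (fun q hq => Or.inr (by simpa using hq))
  rw [Nat.card_Icc] at h1
  rw [show (j : ℕ) + 1 = (n - k + j) + 1 - (n - k) by omega, ← h1]
  congr 1
  ext t
  simp only [Finset.mem_filter, Finset.mem_Icc]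
  have hk := h.hk
  constructor
  · rintro ⟨h1, h2, h3⟩
    refine ⟨h1, h2, ?_⟩
    have := h2.2.1
    unfold InG at this
    omega
  · rintro ⟨h1, h2, h3⟩
    exact ⟨h1, h2, h3.1⟩

def KK (k : ℕ) : ℕ := ∑ j : Fin k, ((j : ℕ) + 1)

open Classical in
theorem Start.cardDA (h : Start S k a c) :
    ((Finset.range (NN n)).filter (fun t => ∃ j, DA S k a j t)).card = 2 * KK k := by
  rw [card_exists _ (fun j t => DA S k a j t) (fun i j t => h.DA_excl), KK, Finset.mul_sum]
  apply Finset.sum_congr rfl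
  intro j _
  rw [two_mul]
  nth_rw 1 [← h.cardDA_A j]
  rw [← h.cardDA_C j, ← Finset.card_union_of_disjoint]
  · congr 1
    ext t
    simp only [Finset.mem_filter, Finset.mem_union]
    constructor
    · rintro ⟨h1, h2⟩
      have := DA_zone h2
      tauto
    · tauto
  · rw [Finset.disjoint_left]
    intro t h1 h2
    simp only [Finset.mem_filter] at h1 h2
    have := h.hk
    omega

open Classical in
theorem Start.cardDC (h : Start S k a c) :
    ((Finset.range (NN n)).filter (fun t => ∃ j, DC S k c j t)).card = 2 * KK k := by
  have := h.mir.cardDA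
  simpa only [DA_mir h.hk] using this

open Classical in
theorem Start.bound_T (h : Start S k a c) (i : Fin k) :
    ((Finset.range (NN n)).filter (fun t => rm S t = a i ∧ n - k ≤ g S t ∧ ∃ l, DC S k c l t)).card
      ≤ TA S k a c i := by
  have hk := h.hk
  unfold TA
  let f : ℕ → Fin k := fun t => if hx : ∃ l, DC S k c l t then hx.choose else i
  have hf : ∀ t, (∃ l, DC S k c l t) → DC S k c (f t) t := by
    intro t ht
    simp only [f, dif_pos ht]
    exact ht.choose_spec
  apply Finset.card_le_card_of_injOn f
  · intro t ht
    simp only [Finset.coe_filter, Finset.mem_range, Set.mem_ofPred_eq, Finset.mem_univ, true_and] at ht ⊢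
    obtain ⟨h1, h2, h3, h4⟩ := ht
    have h5 := hf t h4
    have h6 : t < fc S k (c (f t)) := h.lt_fc (fun s hs => lt_of_le_of_lt h3 (h5.2.2 s hs))
    have h7 : fa S k (a i) ≤ t := fa_le (by rw [← h2, P_rm]; omega)
    omega
  · intro t ht u hu htu
    simp only [Finset.coe_filter, Finset.mem_range, Set.mem_ofPred_eq] at ht hu
    have h1 := hf t ht.2.2.2
    have h2 := hf u hu.2.2.2
    rw [← htu] at h2
    exact swap_once S ht.1 hu.1 (ht.2.1.trans hu.2.1.symm) (h1.1.trans h2.1.symm)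

theorem Start.dblC_le (h : Start S k a c) (i : Fin k) :
    dblC S k a c i ≤ min ((i : ℕ) + 1) (TA S k a c i) := by
  classical
  apply le_min
  · rw [← h.cardDA_C i]
    apply Finset.card_le_card
    intro t
    simp only [Finset.mem_filter]
    tauto
  · refine le_trans (Finset.card_le_card ?_) (h.bound_T i)
    intro t
    simp only [Finset.mem_filter]
    rintro ⟨h1, h2, h3, h4⟩
    exact ⟨h1, h3.1, h2, h4⟩

theorem Start.dblA_le (h : Start S k a c) (i : Fin k) :
    dblA S k a c i ≤ min ((i : ℕ) + 1) (TC S k a c i) := by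
  have := h.mir.dblC_le i
  rwa [dblC_mir h.hk, TA_mir h.hk] at this

open Classical in
theorem Start.card_dbl (h : Start S k a c) :
    ((Finset.range (NN n)).filter (fun t => (∃ j, DA S k a j t) ∧ ∃ j, DC S k c j t)).card =
      ∑ i, dblC S k a c i + ∑ i, dblA S k a c i := by
  have hk := h.hk
  unfold dblC dblA
  rw [← card_exists _ (fun i t => n - k ≤ g S t ∧ DA S k a i t ∧ ∃ l, DC S k c l t)
    (fun i j t h1 h2 => h.DA_excl h1.2.1 h2.2.1),
    ← card_exists _ (fun i t => g S t ≤ k ∧ DC S k c i t ∧ ∃ l, DA S k a l t)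
    (fun i j t h1 h2 => h.DC_excl h1.2.1 h2.2.1), ← Finset.card_union_of_disjoint]
  · congr 1
    ext t
    simp only [Finset.mem_filter, Finset.mem_union]
    constructor
    · rintro ⟨h1, ⟨j, h2⟩, ⟨l, h3⟩⟩
      rcases DA_zone h2 with h4 | h4
      · exact Or.inr ⟨h1, l, h4, h3, j, h2⟩
      · exact Or.inl ⟨h1, j, h4, h2, l, h3⟩
    · rintro (⟨h1, j, h4, h2, l, h3⟩ | ⟨h1, l, h4, h3, j, h2⟩)
      · exact ⟨h1, ⟨j, h2⟩, ⟨l, h3⟩⟩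
      · exact ⟨h1, ⟨j, h2⟩, ⟨l, h3⟩⟩
  · rw [Finset.disjoint_left]
    intro t h1 h2
    simp only [Finset.mem_filter] at h1 h2
    obtain ⟨_, i, h1, _⟩ := h1
    obtain ⟨_, j, h2, _⟩ := h2
    omega

open Classical in
theorem Start.card_union (h : Start S k a c) :
    ((Finset.range (NN n)).filter (fun t => (∃ j, DA S k a j t) ∨ ∃ j, DC S k c j t)).card +
      (∑ i, dblC S k a c i + ∑ i, dblA S k a c i) = 4 * KK k := by
  rw [← h.card_dbl, Finset.filter_or, Finset.filter_and, Finset.card_union_add_card_inter,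
    h.cardDA, h.cardDC]
  ring

variable (S k) in
open Classical in
noncomputable def Zc : ℕ := ((Finset.range (NN n)).filter (fun t => g S t ≤ k ∨ n - k ≤ g S t)).card

theorem Zc_shift (τ : ℕ) : Zc (shift S τ) k = Zc S k := by
  classical
  unfold Zc
  simp only [(rm_shift S τ _).2]
  have hper : Function.Periodic (fun t => (g S t ≤ k ∨ n - k ≤ g S t)) (NN n) := by
    intro t
    have h1 := g_lt S t
    have h2 := g_pos S t
    simp only [g_per, eq_iff_iff]
    omega
  have h1 := Nat.filter_Ico_card_eq_of_periodic τ (NN n) _ hper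
  rw [Nat.count_eq_card_filter_range] at h1
  rw [← h1]
  apply Finset.card_bij (fun t _ => τ + t)
  · intro t ht
    simp only [Finset.mem_filter, Finset.mem_range, Finset.mem_Ico] at ht ⊢
    exact ⟨by omega, ht.2⟩
  · intro t _ u _ h
    omega
  · intro t ht
    simp only [Finset.mem_filter, Finset.mem_range, Finset.mem_Ico] at ht
    refine ⟨t - τ, ?_, by omega⟩
    simp only [Finset.mem_filter, Finset.mem_range]
    rw [Nat.add_sub_cancel' ht.1.1]
    exact ⟨by omega, ht.2⟩

theorem CPerf.Zc_eq (h : Start S k a c) (hp : CPerf S k a c) :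
    Zc S k + (∑ i, dblC S k a c i + ∑ i, dblA S k a c i) = 4 * KK k := by
  classical
  rw [← h.card_union, Zc]
  congr 2
  ext t
  simp only [Finset.mem_filter, Finset.mem_range]
  constructor
  · rintro ⟨h1, h2⟩
    exact ⟨h1, hp.disc t h1 h2⟩
  · rintro ⟨h1, ⟨j, h2⟩ | ⟨j, h2⟩⟩
    · exact ⟨h1, DA_zone h2⟩
    · exact ⟨h1, DC_zone h2⟩

theorem perf_of_count (h : Start S k a c) (hn : NoConf S k a c) (hZ : Zc S k ≤ 3 * KK k)
    (hs : ∀ i j, fc S k (c i) < fa S k (a j)) : CPerf S k a c := by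
  classical
  have hTA : ∀ i, TA S k a c i = 0 := by
    intro i
    rw [TA, Finset.card_eq_zero, Finset.filter_eq_empty_iff]
    intro l _
    have := hs l i
    omega
  have hTC : ∀ i, TC S k a c i = k := by
    intro i
    rw [TC, Finset.filter_true_of_mem (fun l _ => hs i l)]
    simp
  have h1 : ∀ i, dblC S k a c i = 0 := by
    intro i
    have := h.dblC_le i
    rw [hTA] at this
    omega
  have h2 : ∀ i : Fin k, dblA S k a c i ≤ (i : ℕ) + 1 := by
    intro i
    have := h.dblA_le i
    rw [hTC] at this
    omega
  have h3 : ∑ i, dblA S k a c i ≤ KK k := Finset.sum_le_sum (fun i _ => h2 i)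
  have h4 := h.card_union
  have h5 : ∑ i, dblC S k a c i = 0 := Finset.sum_eq_zero (fun i _ => h1 i)
  have hsub : (Finset.range (NN n)).filter (fun t => (∃ j, DA S k a j t) ∨ ∃ j, DC S k c j t) ⊆
     (Finset.range (NN n)).filter (fun t => g S t ≤ k ∨ n - k ≤ g S t) := by
    intro t
    simp only [Finset.mem_filter, Finset.mem_range]
    rintro ⟨h1, ⟨j, h2⟩ | ⟨j, h2⟩⟩
    · exact ⟨h1, DA_zone h2⟩
    · exact ⟨h1, DC_zone h2⟩
  have h6 := Finset.card_le_card hsub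
  have hZ' : ((Finset.range (NN n)).filter (fun t => g S t ≤ k ∨ n - k ≤ g S t)).card ≤ 3 * KK k := hZ
  have h7 := Finset.eq_of_subset_of_card_le hsub (by omega)
  have h8 : ∑ i, dblA S k a c i = KK k := by omega
  have h9 := (Finset.sum_eq_sum_iff_of_le (fun i _ => h2 i)).1 h8
  refine ⟨hn, fun t ht hz => ?_, fun i => ?_, fun i => ?_⟩
  · have : t ∈ (Finset.range (NN n)).filter (fun t => g S t ≤ k ∨ n - k ≤ g S t) := by
      simp only [Finset.mem_filter, Finset.mem_range]
      exact ⟨ht, hz⟩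
    rw [← h7] at this
    exact (Finset.mem_filter.1 this).2
  · rw [h1, hTA]
    simp
  · rw [h9 i (Finset.mem_univ _), hTC]
    have := i.2
    omega

/-! structure -/

open Classical in
theorem depth_count (S : AllowableSeq n) (m : ℕ) (x : Fin n) (h0 : P S 0 x ≤ m) (T : ℕ) :
    ((Finset.range T).filter (fun t => rm S t = x ∧ m ≤ g S t)).card =
    ((Finset.range T).filter (fun t => lm S t = x ∧ m ≤ g S t)).card + (P S T x - m) := by
  induction T with
  | zero => simp; omega
  | succ T ih =>
    rw [Finset.range_add_one, Finset.filter_insert, Finset.filter_insert]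
    have hne := rm_ne_lm S T
    rcases step_cases S T x with ⟨h1, h2, h3⟩ | ⟨h1, h2, h3⟩ | ⟨h1, h2, h3⟩
    · have h4 : lm S T ≠ x := fun h => hne (by rw [h, h1])
      by_cases hm : m ≤ g S T
      · rw [if_pos ⟨h1.symm, hm⟩, if_neg (fun h => h4 h.1), Finset.card_insert_of_notMem (by simp)]
        omega
      · rw [if_neg (fun h => hm h.2), if_neg (fun h => h4 h.1)]
        omega
    · have h4 : rm S T ≠ x := fun h => hne (by rw [h, h1])
      by_cases hm : m ≤ g S T
      · rw [if_neg (fun h => h4 h.1), if_pos ⟨h1.symm, hm⟩, Finset.card_insert_of_notMem (by simp)]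
        omega
      · rw [if_neg (fun h => hm h.2), if_neg (fun h => hm h.2)]
        omega
    · rw [if_neg (fun h => h1 h.1.symm), if_neg (fun h => h2 h.1.symm)]
      omega

theorem all_after (h : Start S k a c) (hp : CPerf S k a c) (K : Fin k) (hK : ∀ i, i ≤ K)
    (h1 : fc S k (c K) < fa S k (a K)) (r : Fin k) (hr : fa S k (a r) < fc S k (c K))
    (hr' : ∀ j, r < j → fc S k (c K) < fa S k (a j)) :
    ∀ l, fa S k (a r) < fc S k (c l) := by
  classical
  have hk := h.hk
  have hcK : ∀ l, fc S k (c l) ≤ fc S k (c K) := fun l => by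
    rcases (hK l).lt_or_eq with h' | h'
    · exact (h.fc_mono hp.nconf h').le
    · rw [h']
  have hT1 : 1 ≤ TA S k a c r := by
    rw [TA, Nat.one_le_iff_ne_zero, Finset.card_ne_zero]
    exact ⟨K, by simpa using hr⟩
  have hd := hp.cA r
  -- a double step
  obtain ⟨v, hv⟩ : ((Finset.range (NN n)).filter
      (fun t => n - k ≤ g S t ∧ DA S k a r t ∧ ∃ l, DC S k c l t)).Nonempty := by
    rw [← Finset.card_pos]
    change 0 < dblC S k a c r
    omega
  simp only [Finset.mem_filter, Finset.mem_range] at hv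
  obtain ⟨hv1, hv2, hv3, l0, hv4⟩ := hv
  have hv5 : v < fc S k (c K) := lt_of_lt_of_le
    (h.lt_fc (i := l0) (fun s hs => lt_of_le_of_lt hv2 (hv4.2.2 s hs))) (hcK l0)
  have hv6 : n - k < P S (v + 1) (a r) := by
    rw [← hv3.1, P_rm']; omega
  have hstay : ∀ t, fc S k (c K) ≤ t → t ≤ NN n → n - k < P S t (a r) := by
    intro t ht1 ht2
    by_contra hcon
    obtain ⟨w, w1, w2, w3, w4, _⟩ := crossR S (s := t) (e := NN n) (q := n - k) (x := a r) ht2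
      (by omega) (by rw [h.ea]; omega)
    rcases hp.disc w w2 (Or.inr w4.ge) with ⟨j, hj⟩ | ⟨j, hj⟩
    · have hjr := h.a_inj (hj.1.symm.trans w3)
      subst hjr
      have := hj.2.2 (v+1) (by omega)
      omega
    · have h2 := hj.2.2 (fc S k (c j)) (by have := hcK j; omega)
      have h3 := (h.fc_spec j).1
      omega
  have hfcN := (h.fc_spec K).2
  have hu : ∀ j, r < j → ∃ u, u < NN n ∧ rm S u = a j ∧ lm S u = a r ∧ n - k ≤ g S u := by
    intro j hj
    have hj' : (r : ℕ) < j := hj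
    obtain ⟨u, u1, u2, u3, u4⟩ := flip S (s := fc S k (c K)) (e := NN n) (x := a j) (y := a r) hfcN
      (by
        have h2 := fa_min (S := S) (hr' j hj)
        have h3 := hstay _ le_rfl hfcN
        omega)
      (by rw [h.ea, h.ea]; omega)
    refine ⟨u, u2, u3, u4, ?_⟩
    have := hstay (u+1) (by omega) (by omega)
    rw [← u4, P_lm'] at this
    omega
  choose! f hf using hu
  have hL : (Finset.Ioi r).card ≤ ((Finset.range (NN n)).filter
      (fun t => lm S t = a r ∧ n - k ≤ g S t)).card := by
    apply Finset.card_le_card_of_injOn f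
    · intro j hj
      have := hf j (by simpa using hj)
      simp only [Finset.coe_filter, Finset.mem_range, Set.mem_ofPred_eq]
      exact ⟨this.1, this.2.2⟩
    · intro i hi j hj hij
      have h2 := (hf i (by simpa using hi)).2.1
      have h3 := (hf j (by simpa using hj)).2.1
      rw [hij] at h2
      exact h.a_inj (h2.symm.trans h3)
  rw [Fin.card_Ioi] at hL
  have hR := depth_count S (n - k) (a r) (by rw [h.ha]; omega) (NN n)
  rw [h.ea] at hR
  have hR12 : ((Finset.range (NN n)).filter (fun t => rm S t = a r ∧ n - k ≤ g S t)) =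
     ((Finset.range (NN n)).filter (fun t => DA S k a r t ∧ n - k ≤ g S t)) ∪
     ((Finset.range (NN n)).filter (fun t => rm S t = a r ∧ n - k ≤ g S t ∧ ∃ l, DC S k c l t)) := by
    ext t
    simp only [Finset.mem_filter, Finset.mem_union, Finset.mem_range]
    constructor
    · rintro ⟨t1, t2, t3⟩
      rcases hp.disc t t1 (Or.inr t3) with ⟨j, hj⟩ | hj
      · have hjr := h.a_inj (hj.1.symm.trans t2)
        subst hjr
        exact Or.inl ⟨t1, hj, t3⟩
      · exact Or.inr ⟨t1, t2, t3, hj⟩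
    · rintro (⟨t1, t2, t3⟩ | ⟨t1, t2, t3, t4⟩)
      · exact ⟨t1, t2.1, t3⟩
      · exact ⟨t1, t2, t3⟩
  have hI : dblC S k a c r ≤ (((Finset.range (NN n)).filter (fun t => DA S k a r t ∧ n - k ≤ g S t)) ∩
     ((Finset.range (NN n)).filter (fun t => rm S t = a r ∧ n - k ≤ g S t ∧ ∃ l, DC S k c l t))).card := by
    apply Finset.card_le_card
    intro t
    simp only [Finset.mem_filter, Finset.mem_inter]
    rintro ⟨t1, t2, t3, t4⟩
    exact ⟨⟨t1, t3, t2⟩, t1, t3.1, t2, t4⟩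
  have hU := Finset.card_union_add_card_inter
     ((Finset.range (NN n)).filter (fun t => DA S k a r t ∧ n - k ≤ g S t))
     ((Finset.range (NN n)).filter (fun t => rm S t = a r ∧ n - k ≤ g S t ∧ ∃ l, DC S k c l t))
  rw [← hR12, h.cardDA_C r] at hU
  have hT := h.bound_T r
  have hrK : r < K := by
    rcases (hK r).lt_or_eq with h' | h'
    · exact h'
    · subst h'; omega
  have hrK' : (r : ℕ) < K := hrK
  have hKk := K.2
  have hTk : k ≤ TA S k a c r := by omega
  have hTu : Finset.univ.filter (fun l => fa S k (a r) < fc S k (c l)) = Finset.univ := by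
    apply Finset.eq_of_subset_of_card_le (Finset.filter_subset _ _)
    simpa [TA] using hTk
  intro l
  have : l ∈ Finset.univ.filter (fun l => fa S k (a r) < fc S k (c l)) := by rw [hTu]; simp
  exact (Finset.mem_filter.1 this).2

theorem sum_id (r s : ℕ) : ∑ l ∈ Finset.range (r + s), min (l + 1) s = ∑ i ∈ Finset.range s, (r + i + 1) := by
  induction r with
  | zero =>
    rw [zero_add]
    apply Finset.sum_congr rfl
    intro i hi
    rw [Finset.mem_range] at hi
    omega
  | succ r ih =>
    rw [show r + 1 + s = (r + s) + 1 by omega, Finset.sum_range_succ, ih]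
    have : ∀ i ∈ Finset.range s, r + 1 + i + 1 = (r + i + 1) + 1 := fun i _ => by omega
    have e : ∑ i ∈ Finset.range s, (r + 1 + i + 1) = ∑ i ∈ Finset.range s, (r + i + 1) + s := by
      rw [Finset.sum_congr rfl this, Finset.sum_add_distrib (f := fun i => r + i + 1) (g := fun _ => 1),
        Finset.sum_const, Finset.card_range, smul_eq_mul, mul_one]
    rw [e]
    omega

theorem sum_Ioi (k : ℕ) (r : Fin k) :
    ∑ l : Fin k, min ((l : ℕ) + 1) (k - 1 - r) = ∑ i ∈ Finset.Ioi r, ((i : ℕ) + 1) := by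
  have hr := r.2
  rw [Fin.sum_univ_eq_sum_range (fun l => min (l + 1) (k - 1 - r)) k]
  have h1 : ∑ i ∈ Finset.Ioi r, ((i : ℕ) + 1) = ∑ i ∈ Finset.range (k - 1 - r), ((r + 1) + i + 1) := by
    symm
    apply Finset.sum_bij (fun i hi => (⟨r + 1 + i, by rw [Finset.mem_range] at hi; omega⟩ : Fin k))
    · intro i hi
      simp only [Finset.mem_Ioi, Fin.lt_def]
      omega
    · intro i hi j hj hij
      simp only [Fin.mk.injEq] at hij
      omega
    · intro j hj
      simp only [Finset.mem_Ioi, Fin.lt_def] at hj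
      exact ⟨j - (r + 1), by rw [Finset.mem_range]; omega, by ext; simp; omega⟩
    · intro i hi
      rfl
  rw [h1, ← sum_id]
  congr 2
  omega

open Classical in
theorem all_double (h : Start S k a c) (hp : CPerf S k a c) (r : Fin k)
    (hr : ∀ l, fa S k (a r) < fc S k (c l)) (hr' : ∀ l j, r < j → fc S k (c l) < fa S k (a j)) :
    (∀ t < NN n, ∀ i, r < i → DA S k a i t → g S t ≤ k → ∃ l, DC S k c l t) ∧
    ∑ i, dblC S k a c i + ∑ i, dblA S k a c i = KK k := by
  have hk := h.hk
  have hale : ∀ i, i ≤ r → fa S k (a i) ≤ fa S k (a r) := fun i hi => by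
    rcases hi.lt_or_eq with h' | h'
    · exact (h.fa_mono hp.nconf h').le
    · rw [h']
  have hTC : ∀ l, TC S k a c l = k - 1 - r := by
    intro l
    rw [TC, ← Fin.card_Ioi]
    congr 1
    ext j
    simp only [Finset.mem_filter, Finset.mem_univ, true_and, Finset.mem_Ioi]
    constructor
    · intro hj
      by_contra hcon
      have := hale j (not_lt.1 hcon)
      have := hr l
      omega
    · exact hr' l j
  have hTA : ∀ i, TA S k a c i = if i ≤ r then k else 0 := by
    intro i
    split_ifs with hi
    · rw [TA, Finset.filter_true_of_mem]
      · simp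
      · intro l _
        have := hale i hi
        have := hr l
        omega
    · rw [TA, Finset.card_eq_zero, Finset.filter_eq_empty_iff]
      intro l _
      have := hr' l i (not_le.1 hi)
      omega
  have hdA : ∑ i, dblA S k a c i = ∑ i ∈ Finset.Ioi r, ((i : ℕ) + 1) := by
    rw [← sum_Ioi]
    apply Finset.sum_congr rfl
    intro l _
    rw [hp.cC, hTC]
  have hdC : ∑ i, dblC S k a c i = ∑ i ∈ Finset.univ.filter (fun i => i ≤ r), ((i : ℕ) + 1) := by
    rw [Finset.sum_filter]
    apply Finset.sum_congr rfl
    intro i _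
    rw [hp.cA, hTA]
    have := i.2
    split_ifs <;> omega
  constructor
  · have hE : ((Finset.range (NN n)).filter (fun t => ∃ i, r < i ∧ DA S k a i t ∧ g S t ≤ k)).card =
        ∑ i ∈ Finset.Ioi r, ((i : ℕ) + 1) := by
      rw [card_exists _ (fun i t => r < i ∧ DA S k a i t ∧ g S t ≤ k)
        (fun i j t h1 h2 => h.DA_excl h1.2.1 h2.2.1)]
      have : Finset.Ioi r = Finset.univ.filter (fun i => r < i) := by ext; simp
      rw [this, Finset.sum_filter]
      apply Finset.sum_congr rfl
      intro i _
      split_ifs with hi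
      · rw [← h.cardDA_A i]
        congr 1
        ext t
        simp [hi]
      · simp [hi]
    have hD : ((Finset.range (NN n)).filter
        (fun t => ∃ l, g S t ≤ k ∧ DC S k c l t ∧ ∃ i, DA S k a i t)).card = ∑ i, dblA S k a c i :=
      card_exists _ (fun l t => g S t ≤ k ∧ DC S k c l t ∧ ∃ i, DA S k a i t)
        (fun i j t h1 h2 => h.DC_excl h1.2.1 h2.2.1)
    have hsub : ((Finset.range (NN n)).filter
        (fun t => ∃ l, g S t ≤ k ∧ DC S k c l t ∧ ∃ i, DA S k a i t)) ⊆
        ((Finset.range (NN n)).filter (fun t => ∃ i, r < i ∧ DA S k a i t ∧ g S t ≤ k)) := by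
      intro t
      simp only [Finset.mem_filter]
      rintro ⟨t1, l, t2, t3, i, t4⟩
      refine ⟨t1, i, ?_, t4, t2⟩
      by_contra hcon
      have h1 := hale i (not_lt.1 hcon)
      have h2 := hr l
      have h3 : t < fa S k (a i) := h.lt_fa (fun s hs => (t4.2.2 s hs).trans t2)
      have h4 : fc S k (c l) ≤ t := fc_le (by rw [← t3.1, P_lm]; omega)
      omega
    have heq := Finset.eq_of_subset_of_card_le hsub (by rw [hE, hD, hdA])
    intro t ht i hi hd hg
    have hm : t ∈ ((Finset.range (NN n)).filter (fun t => ∃ i, r < i ∧ DA S k a i t ∧ g S t ≤ k)) := by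
      simp only [Finset.mem_filter, Finset.mem_range]
      exact ⟨ht, i, hi, hd, hg⟩
    rw [← heq] at hm
    obtain ⟨_, l, _, hl, _⟩ := Finset.mem_filter.1 hm
    exact ⟨l, hl⟩
  · rw [hdA, hdC, KK, ← Finset.sum_filter_add_sum_filter_not Finset.univ (fun i => i ≤ r)]
    congr 2
    ext i
    simp

theorem exists_pos (S : AllowableSeq n) (t q : ℕ) (h1 : 1 ≤ q) (h2 : q ≤ n) : ∃ x, P S t x = q := by
  have hsub : Finset.univ.image (P S t) ⊆ Finset.Icc 1 n := by
    intro q hq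
    obtain ⟨x, _, rfl⟩ := Finset.mem_image.1 hq
    exact Finset.mem_Icc.2 ⟨P_pos S t x, P_le S t x⟩
  have heq := Finset.eq_of_subset_of_card_le hsub (by
    rw [Finset.card_image_of_injective _ (fun x y h => P_inj S t h)]
    simp)
  have : q ∈ Finset.univ.image (P S t) := by rw [heq]; exact Finset.mem_Icc.2 ⟨h1, h2⟩
  obtain ⟨x, _, hx⟩ := Finset.mem_image.1 this
  exact ⟨x, hx⟩

theorem main_clean (h : Start S k a c) (hp : CPerf S k a c) (K : Fin k) (hK : ∀ i, i ≤ K)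
    (h1 : fc S k (c K) < fa S k (a K)) (h2 : ∃ i, fa S k (a i) < fc S k (c K)) :
    ∃ (τ : ℕ) (a' : Fin k → Fin n), Start (shift S τ) k a' c ∧ CPerf (shift S τ) k a' c ∧
      ∀ i j, fc (shift S τ) k (c i) < fa (shift S τ) k (a' j) := by
  classical
  have hk := h.hk
  have hcK : ∀ l, fc S k (c l) ≤ fc S k (c K) := fun l => by
    rcases (hK l).lt_or_eq with h' | h'
    · exact (h.fc_mono hp.nconf h').le
    · rw [h']
  obtain ⟨r, hr, hrmax⟩ := Finset.exists_max_image
    (Finset.univ.filter (fun i => fa S k (a i) < fc S k (c K))) id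
    (by obtain ⟨i, hi⟩ := h2; exact ⟨i, by simpa using hi⟩)
  simp only [Finset.mem_filter, Finset.mem_univ, true_and, id] at hr hrmax
  have hr' : ∀ j, r < j → fc S k (c K) < fa S k (a j) := by
    intro j hj
    have h3 := h.fa_ne_fc j K
    by_contra hcon
    have := hrmax j (by omega)
    exact absurd hj (not_lt.2 this)
  have hal := all_after h hp K hK h1 r hr hr'
  obtain ⟨hdbl, hsum⟩ := all_double h hp r hal (fun l j hj => lt_of_le_of_lt (hcK l) (hr' j hj))
  have hale : ∀ i, i ≤ r → fa S k (a i) ≤ fa S k (a r) := fun i hi => by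
    rcases hi.lt_or_eq with h' | h'
    · exact (h.fa_mono hp.nconf h').le
    · rw [h']
  obtain ⟨τ, hτ⟩ : ∃ τ, τ = fa S k (a r) := ⟨_, rfl⟩
  rw [← hτ] at hal hale
  have hτN : τ < NN n := by have := hal K; have := (h.fc_spec K).2; omega
  -- A-zone steps after τ are c-discoveries
  have hAz : ∀ t, τ ≤ t → t < NN n → g S t ≤ k → ∃ l, DC S k c l t := by
    intro t t1 t2 t3
    rcases hp.disc t t2 (Or.inl t3) with ⟨i, hi⟩ | hl
    · by_cases hir : i ≤ r
      · have h3 : t < fa S k (a i) := h.lt_fa (fun s hs => (hi.2.2 s hs).trans t3)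
        have := hale i hir
        omega
      · exact hdbl t t2 i (not_le.1 hir) hi t3
    · exact hl
  have hfree : ∀ t, τ ≤ t → t < NN n → g S t ≤ k → fc S k (c K) ≤ t := by
    intro t t1 t2 t3
    by_contra hcon
    obtain ⟨l, hl⟩ := hAz t t1 t2 t3
    have hPl : P S t (c l) = g S t + 1 := by rw [← hl.1, P_lm]
    have hPl' : P S (t+1) (c l) = g S t := by rw [← hl.1, P_lm']
    have hPK := fc_min (S := S) (k := k) (x := c K) (s := t) (by omega)
    have hlK : (l : ℕ) < K := by
      rcases (hK l).lt_or_eq with h' | h'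
      · exact h'
      · subst h'; omega
    have hKk := K.2
    obtain ⟨u, u1, u2, u3, u4⟩ := flip S (s := t) (e := NN n) (x := c l) (y := c K) t2.le (by omega)
      (by rw [h.ec, h.ec]; omega)
    have hut : u ≠ t := by
      rintro rfl
      exact rm_ne_lm S u (u3.trans hl.1.symm)
    have hstay : ∀ w, t + 1 ≤ w → w ≤ NN n → P S w (c l) ≤ k := by
      intro w w1 w2
      by_contra hc
      obtain ⟨v, v1, v2, v3, v4, _⟩ := crossL S (s := w) (e := NN n) (q := k) (x := c l) w2 (by omega)
        (by rw [h.ec]; omega)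
      obtain ⟨l', hl'⟩ := hAz v (by omega) v2 v4.le
      have := h.c_inj (hl'.1.symm.trans v3)
      subst this
      have := hl'.2.2 (t+1) (by omega)
      omega
    have hPu : P S u (c l) = g S u := by rw [← u3, P_rm]
    have hPu' : P S (u+1) (c l) = g S u + 1 := by rw [← u3, P_rm']
    have hgu := hstay (u+1) (by omega) (by omega)
    have hτl := fc_min (S := S) (k := k) (hal l)
    obtain ⟨v, v1, v2, v3, v4, _⟩ := crossL S (s := τ) (e := u) (q := g S u) (x := c l) (by omega)
      (by omega) (by omega)
    obtain ⟨l', hl'⟩ := hAz v (by omega) (by omega) (by omega)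
    have := h.c_inj (hl'.1.symm.trans v3)
    subst this
    have hG := hl'.2.1
    unfold InG at hG
    obtain ⟨v', v1', v2', v3', v4', _⟩ := crossL S (s := u + 1) (e := NN n) (q := g S u) (x := c l')
      (by omega) (by omega) (by rw [h.ec]; omega)
    obtain ⟨l'', hl''⟩ := hAz v' (by omega) (by omega) (by omega)
    have := h.c_inj (hl''.1.symm.trans v3')
    subst this
    have := hl''.2.2 u (by omega)
    omega
  -- C zone untouched before τ
  have hCz : ∀ t, t ≤ τ → ∀ i, P S t (c i) = n - k + i + 1 := by
    intro t
    induction t with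
    | zero => intro _ i; exact h.hc i
    | succ t ih =>
      intro ht i
      have ih' := ih (by omega)
      have hnot : ∀ i j, rm S t = c i → lm S t = c j → False := by
        intro i j hi hj
        exact hp.nconf.nc t (by omega) i j hi hj
          (fun s hs => fc_min (by have := hal i; omega))
          (fun s hs => fc_min (by have := hal j; omega))
      have hcof : ∀ x, n - k < P S t x → ∃ j, x = c j := by
        intro x hx
        have := P_le S t x
        refine ⟨⟨P S t x - (n - k) - 1, by omega⟩, P_inj S t ?_⟩
        rw [ih']
        simp only
        omega
      rcases step_cases S t (c i) with ⟨g1, g2, g3⟩ | ⟨g1, g2, g3⟩ | ⟨g1, g2, g3⟩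
      · exfalso
        have h5 := P_lm S t
        have h6 := ih' i
        obtain ⟨j, hj⟩ := hcof (lm S t) (by omega)
        exact hnot i j g1.symm hj
      · exfalso
        have h5 := P_rm S t
        have h6 := ih' i
        have h7 := fc_min (S := S) (k := k) (x := c i) (s := t + 1) (by have := hal i; omega)
        obtain ⟨j, hj⟩ := hcof (rm S t) (by omega)
        exact hnot j i hj g1.symm
      · rw [g3, ih']
  have hex : ∀ i : Fin k, ∃ x, P S τ x = k - i := fun i => exists_pos S τ _ (by omega) (by omega)
  choose a' ha' using hex
  have hst : Start (shift S τ) k a' c := by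
    refine ⟨hk, fun i => ?_, fun i => ?_⟩
    · rw [P_shift, add_zero, ha']
    · rw [P_shift, add_zero, hCz τ le_rfl]
  have hac : ∀ i j, a' i ≠ c j := by
    intro i j hij
    have h3 := ha' i
    rw [hij, hCz τ le_rfl] at h3
    omega
  -- at the end of the half period, positions ≤ k are filled with c
  have hend : ∀ i, k < P S (NN n) (a' i) := by
    intro i
    by_contra hcon
    have h3 := P_pos S (NN n) (a' i)
    refine hac i ⟨k - P S (NN n) (a' i), by omega⟩ (P_inj S (NN n) ?_)
    rw [h.ec]
    simp only
    omega
  have hnc : NoConf (shift S τ) k a' c := by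
    constructor
    · intro t ht i j h3 h4 h5 h6
      rw [(rm_shift S τ t).1] at h3
      rw [lm_shift] at h4
      have h7 : τ + t < NN n := by
        by_contra hcon
        have h8 := h5 (NN n - τ) (by omega)
        rw [P_shift, Nat.add_sub_cancel' hτN.le] at h8
        have := hend i
        omega
      have h9 := h5 t le_rfl
      rw [P_shift, ← h3, P_rm] at h9
      obtain ⟨l, hl⟩ := hAz (τ + t) (by omega) h7 h9
      exact hac j l (h4.symm.trans hl.1)
    · intro t ht i j h3 h4 h5 h6
      rw [(rm_shift S τ t).1] at h3
      rw [lm_shift] at h4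
      have h7 : τ + t < NN n := by
        by_contra hcon
        have h8 := h5 (NN n - τ) (by omega)
        rw [P_shift, Nat.add_sub_cancel' hτN.le, h.ec] at h8
        omega
      have key : ∀ i, (∀ s ≤ t, n - k < P (shift S τ) s (c i)) → ∀ s ≤ τ + t, n - k < P S s (c i) := by
        intro i hi s hs
        by_cases hsτ : s ≤ τ
        · rw [hCz s hsτ]; omega
        · have := hi (s - τ) (by omega)
          rwa [P_shift, Nat.add_sub_cancel' (by omega)] at this
      exact hp.nconf.nc (τ + t) h7 i j h3 h4 (key i h5) (key j h6)
  have hsorted : ∀ i j, fc (shift S τ) k (c i) < fa (shift S τ) k (a' j) := by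
    intro i j
    have h3 := h.fc_spec i
    have h4 := hal i
    have h5 : fc (shift S τ) k (c i) ≤ fc S k (c i) - τ := by
      apply fc_le
      rw [P_shift, Nat.add_sub_cancel' (by omega)]
      exact h3.1
    have h6 := hst.fa_spec j
    by_contra hcon
    rw [P_shift] at h6
    obtain ⟨u, u1, u2, u3, u4, _⟩ := crossR S (s := τ) (e := τ + fa (shift S τ) k (a' j)) (q := k)
      (x := a' j) (by omega) (by rw [ha']; omega) h6.1
    have := hfree u u1 (by omega) u4.le
    have := hcK i
    omega
  refine ⟨τ, a', hst, perf_of_count hst hnc ?_ hsorted, hsorted⟩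
  rw [Zc_shift]
  have := CPerf.Zc_eq h hp
  omega

/-! translation to the frozen definitions -/

theorem T_moved {hp : HalfPeriod n} (H : ∀ t ≤ NN n, ∀ x, hp.pos t x = P S t x) {t : ℕ}
    (ht : t < NN n) (z : Fin n) : hp.Moved t z ↔ z = rm S t ∨ z = lm S t := by
  unfold HalfPeriod.Moved
  rw [H (t + 1) ht, H _ ht.le]
  rcases step_cases S t z with h | h | h
  · simp only [h.1, true_or, iff_true]; rw [← h.1]; omega
  · simp only [h.1, or_true, iff_true]; rw [← h.1]; omega
  · simp [h.1, h.2.1, h.2.2]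

theorem T_gate {hp : HalfPeriod n} (H : ∀ t ≤ NN n, ∀ x, hp.pos t x = P S t x) {t : ℕ}
    (ht : t < NN n) (i : ℕ) : hp.GateAt t i ↔ i = g S t := by
  unfold HalfPeriod.GateAt
  constructor
  · rintro ⟨x, y, h1, h2, h3, h4⟩
    rw [H _ ht.le] at h1
    rw [H (t + 1) ht] at h3
    have := rm_uniq S (t := t) (z := x) (by omega)
    omega
  · rintro rfl
    refine ⟨rm S t, lm S t, ?_, ?_, ?_, ?_⟩
    · rw [H _ ht.le, P_rm]
    · rw [H _ ht.le, P_lm]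
    · rw [H (t + 1) ht, P_rm']
    · rw [H (t + 1) ht, P_lm']

theorem T_A {hp : HalfPeriod n} (H : ∀ t ≤ NN n, ∀ x, hp.pos t x = P S t x) {t : ℕ}
    (ht : t < NN n) : AZoneStep hp k t ↔ g S t ≤ k := by
  unfold AZoneStep
  simp only [T_gate H ht]
  have := g_pos S t
  constructor
  · rintro ⟨p, h1, h2, rfl⟩; exact h2
  · intro h; exact ⟨_, this, h, rfl⟩

theorem T_C {hp : HalfPeriod n} (H : ∀ t ≤ NN n, ∀ x, hp.pos t x = P S t x) {t : ℕ}
    (ht : t < NN n) : CZoneStep hp k t ↔ n - k ≤ g S t := by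
  unfold CZoneStep
  simp only [T_gate H ht]
  constructor
  · rintro ⟨p, h1, rfl⟩; exact h1
  · intro h; exact ⟨_, h, rfl⟩

theorem T_swaps {hp : HalfPeriod n} (H : ∀ t ≤ NN n, ∀ x, hp.pos t x = P S t x) {t : ℕ}
    (ht : t < NN n) (x y : Fin n) :
    hp.SwapsAt t x y ↔ (x = rm S t ∧ y = lm S t) ∨ (x = lm S t ∧ y = rm S t) := by
  unfold HalfPeriod.SwapsAt
  rw [T_moved H ht, T_moved H ht]
  have := rm_ne_lm S t
  constructor
  · rintro ⟨h, rfl | rfl, rfl | rfl⟩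
    · exact absurd rfl h
    · exact Or.inl ⟨rfl, rfl⟩
    · exact Or.inr ⟨rfl, rfl⟩
    · exact absurd rfl h
  · rintro (⟨rfl, rfl⟩ | ⟨rfl, rfl⟩)
    · exact ⟨this, Or.inl rfl, Or.inr rfl⟩
    · exact ⟨this.symm, Or.inr rfl, Or.inl rfl⟩

theorem T_fR {hp : HalfPeriod n} (H : ∀ t ≤ NN n, ∀ x, hp.pos t x = P S t x) {t : ℕ}
    (ht : t < NN n) {z : Fin n} {p : ℕ} (h0 : P S 0 z ≤ p) :
    FirstMove hp t z p (p + 1) ↔ rm S t = z ∧ g S t = p ∧ ∀ s ≤ t, P S s z ≤ p := by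
  unfold FirstMove
  rw [H (t + 1) ht, H _ ht.le]
  constructor
  · rintro ⟨h1, h2, h3⟩
    have h4 := rm_uniq S (t := t) (z := z) (by omega)
    refine ⟨h4.1, by omega, fun s hs => ?_⟩
    by_contra hcon
    obtain ⟨u, _, hu, h5, h6, _⟩ := crossR S (Nat.zero_le s) h0 (by omega)
    apply h3 u (by omega)
    rw [H _ (by omega), H _ (by omega), ← h5, P_rm, P_rm', h6]
    exact ⟨rfl, rfl⟩
  · rintro ⟨rfl, rfl, h⟩
    refine ⟨P_rm S t, P_rm' S t, fun s hs h' => ?_⟩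
    have := h (s + 1) hs
    rw [H _ (by omega : s + 1 ≤ NN n)] at h'
    omega

theorem T_fL {hp : HalfPeriod n} (H : ∀ t ≤ NN n, ∀ x, hp.pos t x = P S t x) {t : ℕ}
    (ht : t < NN n) {z : Fin n} {p : ℕ} (h0 : p < P S 0 z) :
    FirstMove hp t z (p + 1) p ↔ lm S t = z ∧ g S t = p ∧ ∀ s ≤ t, p < P S s z := by
  unfold FirstMove
  rw [H (t + 1) ht, H _ ht.le]
  constructor
  · rintro ⟨h1, h2, h3⟩
    have h4 := lm_uniq S (t := t) (z := z) (by omega)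
    refine ⟨h4.1, by omega, fun s hs => ?_⟩
    by_contra hcon
    obtain ⟨u, _, hu, h5, h6, _⟩ := crossL S (Nat.zero_le s) h0 (by omega)
    apply h3 u (by omega)
    rw [H _ (by omega), H _ (by omega), ← h5, P_lm, P_lm', h6]
    exact ⟨rfl, rfl⟩
  · rintro ⟨rfl, rfl, h⟩
    refine ⟨P_lm S t, P_lm' S t, fun s hs h' => ?_⟩
    have := h (s + 1) hs
    rw [H _ (by omega : s + 1 ≤ NN n)] at h'
    omega

theorem T_disc {hp : HalfPeriod n} (h : Start S k a c)
    (H : ∀ t ≤ NN n, ∀ x, hp.pos t x = P S t x) {t : ℕ} (ht : t < NN n) (z : Fin n) :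
    DiscoveryFor hp k a c t z ↔ (∃ j, z = a j ∧ DA S k a j t) ∨ (∃ j, z = c j ∧ DC S k c j t) := by
  have hk := h.hk
  unfold DiscoveryFor
  constructor
  · rintro ⟨i, hi, ⟨j, rfl, hij, h1⟩ | ⟨j, rfl, hij, h1⟩⟩
    · have hj := j.2
      have h0 := h.ha j
      refine Or.inl ⟨j, rfl, ?_⟩
      rcases h1 with h1 | h1
      · rw [T_fR H ht (by omega)] at h1
        obtain ⟨h1, h2, h3⟩ := h1
        exact ⟨h1, Or.inl ⟨by omega, by omega⟩, fun s hs => by have := h3 s hs; omega⟩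
      · rw [show n - k + i = (n - k + i - 1) + 1 by omega, Nat.add_sub_cancel, T_fR H ht (by omega)] at h1
        obtain ⟨h1, h2, h3⟩ := h1
        exact ⟨h1, Or.inr ⟨by omega, by omega⟩, fun s hs => by have := h3 s hs; omega⟩
    · have hj := j.2
      have h0 := h.hc j
      refine Or.inr ⟨j, rfl, ?_⟩
      rcases h1 with h1 | h1
      · rw [T_fL H ht (by omega)] at h1
        obtain ⟨h1, h2, h3⟩ := h1
        exact ⟨h1, Or.inl ⟨by omega, by omega⟩, fun s hs => by have := h3 s hs; omega⟩
      · rw [show n - k + i = (n - k + i - 1) + 1 by omega, Nat.add_sub_cancel, T_fL H ht (by omega)] at h1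
        obtain ⟨h1, h2, h3⟩ := h1
        exact ⟨h1, Or.inr ⟨by omega, by omega⟩, fun s hs => by have := h3 s hs; omega⟩
  · rintro (⟨j, rfl, h1, h2 | h2, h3⟩ | ⟨j, rfl, h1, h2 | h2, h3⟩)
    · have hj := j.2
      have h0 := h.ha j
      refine ⟨k + 1 - g S t, by omega, Or.inl ⟨j, rfl, by omega, Or.inl ?_⟩⟩
      rw [T_fR H ht (by omega), show k - (k + 1 - g S t) + 1 = g S t by omega]
      exact ⟨h1, rfl, h3⟩
    · have hj := j.2
      have h0 := h.ha j
      refine ⟨g S t + 1 - (n - k), by omega, Or.inl ⟨j, rfl, by omega, Or.inr ?_⟩⟩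
      rw [show n - k + (g S t + 1 - (n - k)) = g S t + 1 by omega, Nat.add_sub_cancel, T_fR H ht (by omega)]
      exact ⟨h1, rfl, h3⟩
    · have hj := j.2
      have h0 := h.hc j
      refine ⟨k + 1 - g S t, by omega, Or.inr ⟨j, rfl, by omega, Or.inl ?_⟩⟩
      rw [T_fL H ht (by omega), show k - (k + 1 - g S t) + 1 = g S t by omega]
      exact ⟨h1, rfl, h3⟩
    · have hj := j.2
      have h0 := h.hc j
      refine ⟨g S t + 1 - (n - k), by omega, Or.inr ⟨j, rfl, by omega, Or.inr ?_⟩⟩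
      rw [show n - k + (g S t + 1 - (n - k)) = g S t + 1 by omega, Nat.add_sub_cancel, T_fL H ht (by omega)]
      exact ⟨h1, rfl, h3⟩

theorem T_dd {hp : HalfPeriod n} (h : Start S k a c)
    (H : ∀ t ≤ NN n, ∀ x, hp.pos t x = P S t x) {t : ℕ} (ht : t < NN n) :
    DoubleDiscoveryAt hp k a c t ↔ (∃ j, DA S k a j t) ∧ (∃ j, DC S k c j t) := by
  unfold DoubleDiscoveryAt
  simp only [T_swaps H ht, T_disc h H ht]
  have hne := rm_ne_lm S t
  constructor
  · have key : ∀ x y, x = rm S t → y = lm S t →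
        ((∃ j, x = a j ∧ DA S k a j t) ∨ (∃ j, x = c j ∧ DC S k c j t)) →
        ((∃ j, y = a j ∧ DA S k a j t) ∨ (∃ j, y = c j ∧ DC S k c j t)) →
        (∃ j, DA S k a j t) ∧ (∃ j, DC S k c j t) := by
      rintro x y rfl rfl (⟨j, h1, h2⟩ | ⟨j, h1, h2⟩) (⟨l, h3, h4⟩ | ⟨l, h3, h4⟩)
      · exact absurd (h4.1.trans h3.symm) hne
      · exact ⟨⟨j, h2⟩, ⟨l, h4⟩⟩
      · exact ⟨⟨l, h4⟩, ⟨j, h2⟩⟩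
      · exact absurd (h1.trans h2.1.symm) hne
    rintro ⟨x, y, ⟨h1, h2⟩ | ⟨h1, h2⟩, h3, h4⟩
    · exact key x y h1 h2 h3 h4
    · exact key y x h2 h1 h4 h3
  · rintro ⟨⟨j, hj⟩, ⟨l, hl⟩⟩
    exact ⟨rm S t, lm S t, Or.inl ⟨rfl, rfl⟩, Or.inl ⟨j, hj.1, hj⟩, Or.inr ⟨l, hl.1, hl⟩⟩

theorem T_af {hp : HalfPeriod n} (h : Start S k a c)
    (H : ∀ t ≤ NN n, ∀ x, hp.pos t x = P S t x) (i : Fin k) (u : ℕ) :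
    AFreedAt hp k (a i) u ↔ u = fa S k (a i) := by
  obtain ⟨h1, h2⟩ := h.fa_spec i
  unfold AFreedAt
  constructor
  · rintro ⟨h3, h4⟩
    have h5 : u ≤ fa S k (a i) := by
      by_contra hc
      have := h4 (fa S k (a i)) (by omega)
      rw [H _ h2] at this
      omega
    rw [H _ (by omega)] at h3
    exact le_antisymm h5 (fa_le h3)
  · rintro rfl
    rw [H _ h2]
    refine ⟨h1, fun s hs => ?_⟩
    rw [H _ (by omega)]
    exact fa_min hs

theorem T_cf {hp : HalfPeriod n} (h : Start S k a c)
    (H : ∀ t ≤ NN n, ∀ x, hp.pos t x = P S t x) (i : Fin k) (u : ℕ) :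
    CFreedAt hp k (c i) u ↔ u = fc S k (c i) := by
  obtain ⟨h1, h2⟩ := h.fc_spec i
  unfold CFreedAt
  constructor
  · rintro ⟨h3, h4⟩
    have h5 : u ≤ fc S k (c i) := by
      by_contra hc
      have := h4 (fc S k (c i)) (by omega)
      rw [H _ h2] at this
      omega
    rw [H _ (by omega)] at h3
    exact le_antisymm h5 (fc_le h3)
  · rintro rfl
    rw [H _ h2]
    refine ⟨h1, fun s hs => ?_⟩
    rw [H _ (by omega)]
    exact fc_min hs

theorem T_TA {hp : HalfPeriod n} (h : Start S k a c)
    (H : ∀ t ≤ NN n, ∀ x, hp.pos t x = P S t x) (i : Fin k) :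
    TCardA hp k a c i = TA S k a c i := by
  classical
  unfold TCardA TA
  rw [← Set.ncard_coe_finset]
  congr 1
  ext l
  simp [T_af h H, T_cf h H]

theorem T_TC {hp : HalfPeriod n} (h : Start S k a c)
    (H : ∀ t ≤ NN n, ∀ x, hp.pos t x = P S t x) (i : Fin k) :
    TCardC hp k a c i = TC S k a c i := by
  classical
  unfold TCardC TC
  rw [← Set.ncard_coe_finset]
  congr 1
  ext l
  simp [T_af h H, T_cf h H]

theorem Start.ac_ne (h : Start S k a c) (i j : Fin k) : a i ≠ c j := by
  intro he
  have h1 := h.ha i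
  have h2 := h.hc j
  have := h.hk
  rw [he] at h1
  omega

theorem T_dC {hp : HalfPeriod n} (h : Start S k a c)
    (H : ∀ t ≤ NN n, ∀ x, hp.pos t x = P S t x) (i : Fin k) :
    {t : ℕ | t < HalfPeriod.steps n ∧ CZoneStep hp k t ∧ hp.Moved t (a i) ∧
      DoubleDiscoveryAt hp k a c t}.ncard = dblC S k a c i := by
  classical
  unfold dblC
  rw [← Set.ncard_coe_finset]
  congr 1
  ext t
  simp only [Set.mem_setOf_eq, Finset.coe_filter, Finset.mem_range]
  apply and_congr_right
  intro ht
  have ht : t < NN n := ht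
  rw [T_C H ht, T_moved H ht, T_dd h H ht]
  apply and_congr_right
  intro _
  constructor
  · rintro ⟨h1, ⟨j, hj⟩, ⟨l, hl⟩⟩
    rcases h1 with h1 | h1
    · have := h.a_inj (h1.trans hj.1)
      subst this
      exact ⟨hj, l, hl⟩
    · exact absurd (h1.trans hl.1) (h.ac_ne i l)
  · rintro ⟨h1, l, hl⟩
    exact ⟨Or.inl h1.1.symm, ⟨i, h1⟩, ⟨l, hl⟩⟩

theorem T_dA {hp : HalfPeriod n} (h : Start S k a c)
    (H : ∀ t ≤ NN n, ∀ x, hp.pos t x = P S t x) (i : Fin k) :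
    {t : ℕ | t < HalfPeriod.steps n ∧ AZoneStep hp k t ∧ hp.Moved t (c i) ∧
      DoubleDiscoveryAt hp k a c t}.ncard = dblA S k a c i := by
  classical
  unfold dblA
  rw [← Set.ncard_coe_finset]
  congr 1
  ext t
  simp only [Set.mem_setOf_eq, Finset.coe_filter, Finset.mem_range]
  apply and_congr_right
  intro ht
  have ht : t < NN n := ht
  rw [T_A H ht, T_moved H ht, T_dd h H ht]
  apply and_congr_right
  intro _
  constructor
  · rintro ⟨h1, ⟨j, hj⟩, ⟨l, hl⟩⟩
    rcases h1 with h1 | h1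
    · exact absurd (h1.trans hj.1).symm (h.ac_ne j i)
    · have := h.c_inj (h1.trans hl.1)
      subst this
      exact ⟨hl, j, hj⟩
  · rintro ⟨h1, l, hl⟩
    exact ⟨Or.inr h1.1.symm, ⟨l, hl⟩, ⟨i, h1⟩⟩

theorem T_nc {hp : HalfPeriod n} (h : Start S k a c)
    (H : ∀ t ≤ NN n, ∀ x, hp.pos t x = P S t x) :
    NoConfinedSteps hp k a c ↔ NoConf S k a c := by
  have hk := h.hk
  constructor
  · intro hn
    constructor
    · intro t ht i j h1 h2 h3 h4
      apply hn t ht (a i) (a j) ((T_swaps H ht _ _).2 (Or.inl ⟨h1.symm, h2.symm⟩))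
      refine ⟨Or.inl ⟨⟨i, rfl⟩, fun s hs => ?_⟩, Or.inl ⟨⟨j, rfl⟩, fun s hs => ?_⟩⟩
      · rw [H _ (by omega)]; exact h3 s hs
      · rw [H _ (by omega)]; exact h4 s hs
    · intro t ht i j h1 h2 h3 h4
      apply hn t ht (c i) (c j) ((T_swaps H ht _ _).2 (Or.inl ⟨h1.symm, h2.symm⟩))
      refine ⟨Or.inr ⟨⟨i, rfl⟩, fun s hs => ?_⟩, Or.inr ⟨⟨j, rfl⟩, fun s hs => ?_⟩⟩
      · rw [H _ (by omega)]; exact h3 s hs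
      · rw [H _ (by omega)]; exact h4 s hs
  · intro hn t ht x y hxy
    have ht : t < NN n := ht
    have key : ∀ x y, x = rm S t → y = lm S t → ConfinedAt hp k a c t x →
        ConfinedAt hp k a c t y → False := by
      intro x y hx hy h1 h2
      have e1 : P S t x = g S t := by rw [hx]; rfl
      have e2 : P S t y = g S t + 1 := by rw [hy]; exact P_lm S t
      have f1 := H t ht.le x
      have f2 := H t ht.le y
      rcases h1 with ⟨⟨i, rfl⟩, h1⟩ | ⟨⟨i, rfl⟩, h1⟩ <;> rcases h2 with ⟨⟨j, rfl⟩, h2⟩ | ⟨⟨j, rfl⟩, h2⟩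
      · refine hn.na t ht i j hx.symm hy.symm (fun s hs => ?_) (fun s hs => ?_)
        · rw [← H _ (by omega)]; exact h1 s hs
        · rw [← H _ (by omega)]; exact h2 s hs
      · have := h1 t le_rfl
        have := h2 t le_rfl
        omega
      · have := h1 t le_rfl
        have := h2 t le_rfl
        omega
      · refine hn.nc t ht i j hx.symm hy.symm (fun s hs => ?_) (fun s hs => ?_)
        · rw [← H _ (by omega)]; exact h1 s hs
        · rw [← H _ (by omega)]; exact h2 s hs
    rintro ⟨h1, h2⟩
    rcases (T_swaps H ht _ _).1 hxy with ⟨h3, h4⟩ | ⟨h3, h4⟩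
    · exact key x y h3 h4 h1 h2
    · exact key y x h4 h3 h2 h1

theorem T_perf {hp : HalfPeriod n} (h : Start S k a c)
    (H : ∀ t ≤ NN n, ∀ x, hp.pos t x = P S t x) :
    PerfectHalfPeriod hp k a c ↔ CPerf S k a c := by
  have hd : (∀ t, t < HalfPeriod.steps n → (AZoneStep hp k t ∨ CZoneStep hp k t) →
      ∃ z, hp.Moved t z ∧ DiscoveryFor hp k a c t z) ↔
      ∀ t < NN n, (g S t ≤ k ∨ n - k ≤ g S t) → (∃ j, DA S k a j t) ∨ (∃ j, DC S k c j t) := by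
    refine forall_congr' fun t => forall_congr' fun ht => ?_
    have ht : t < NN n := ht
    rw [T_A H ht, T_C H ht]
    refine forall_congr' fun _ => ?_
    simp only [T_moved H ht, T_disc h H ht]
    constructor
    · rintro ⟨z, _, ⟨j, _, hj⟩ | ⟨j, _, hj⟩⟩
      · exact Or.inl ⟨j, hj⟩
      · exact Or.inr ⟨j, hj⟩
    · rintro (⟨j, hj⟩ | ⟨j, hj⟩)
      · exact ⟨a j, Or.inl hj.1.symm, Or.inl ⟨j, rfl, hj⟩⟩
      · exact ⟨c j, Or.inr hj.1.symm, Or.inr ⟨j, rfl, hj⟩⟩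
  unfold PerfectHalfPeriod
  rw [T_nc h H, hd]
  simp only [T_dC h H, T_dA h H, T_TA h H, T_TC h H]
  constructor
  · rintro ⟨h1, h2, h3, h4⟩; exact ⟨h1, h2, h3, h4⟩
  · rintro ⟨h1, h2, h3, h4⟩; exact ⟨h1, h2, h3, h4⟩

def ofSeq (S : AllowableSeq n) : HalfPeriod n where
  pos t x := P S t x
  pos_mem t _ x := ⟨P_pos S t x, P_le S t x⟩
  pos_inj t _ x y h := P_inj S t h
  step t _ := P_step S t
  reverse x := P_end S x

theorem exists_b (h : Start S k a c) : ∃ b, StandardStart (ofSeq S) k a b c := by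
  have hk := h.hk
  have : ∀ i : Fin (n - 2 * k), ∃ x, P S 0 x = k + (i : ℕ) + 1 := fun i => by
    have := i.2
    exact exists_pos S 0 _ (by omega) (by omega)
  choose b hb using this
  refine ⟨b, ?_, h.ha, hb, h.hc⟩
  rintro (i | i | i) (j | j | j) hij <;> have hi := i.2 <;> have hj := j.2 <;>
    simp only [Sum.elim_inl, Sum.elim_inr] at hij
  · rw [h.a_inj hij]
  · have h1 := h.ha i; have h2 := hb j; rw [hij] at h1; omega
  · exact absurd hij (h.ac_ne i j)
  · have h1 := h.ha j; have h2 := hb i; rw [hij] at h2; omega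
  · have h1 := hb i; have h2 := hb j; rw [hij] at h1
    rw [Fin.ext (a := i) (b := j) (by omega)]
  · have h1 := hb i; have h2 := h.hc j; rw [hij] at h1; omega
  · exact absurd hij.symm (h.ac_ne j i)
  · have h1 := h.hc i; have h2 := hb j; rw [hij] at h1; omega
  · rw [h.c_inj hij]

theorem finish {hp : HalfPeriod n} (h : Start S k a c)
    (H : ∀ t ≤ NN n, ∀ x, hp.pos t x = P S t x) (hn : NoConf S k a c)
    (hs : (∀ i j, fa S k (a i) < fc S k (c j)) ∨ (∀ i j, fc S k (c i) < fa S k (a j))) :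
    (((∀ i j : Fin k, i < j → ∀ u v,
            AFreedAt hp k (a i) u → AFreedAt hp k (a j) v → u < v) ∧
        (∀ i j : Fin k, i < j → ∀ u v,
            CFreedAt hp k (c i) u → CFreedAt hp k (c j) v → u < v) ∧
        (∀ i j : Fin k, ∀ u v,
            AFreedAt hp k (a i) u → CFreedAt hp k (c j) v → u < v)) ∨
       ((∀ i j : Fin k, i < j → ∀ u v,
            AFreedAt hp k (a i) u → AFreedAt hp k (a j) v → u < v) ∧
        (∀ i j : Fin k, i < j → ∀ u v,
            CFreedAt hp k (c i) u → CFreedAt hp k (c j) v → u < v) ∧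
        (∀ i j : Fin k, ∀ u v,
            CFreedAt hp k (c i) u → AFreedAt hp k (a j) v → u < v))) := by
  simp only [T_af h H, T_cf h H]
  have h1 : ∀ i j : Fin k, i < j → fa S k (a i) < fa S k (a j) := fun i j => h.fa_mono hn
  have h2 : ∀ i j : Fin k, i < j → fc S k (c i) < fc S k (c j) := fun i j => h.fc_mono hn
  rcases hs with hs | hs
  · left
    refine ⟨?_, ?_, ?_⟩
    · rintro i j hij u v rfl rfl; exact h1 i j hij
    · rintro i j hij u v rfl rfl; exact h2 i j hij
    · rintro i j u v rfl rfl; exact hs i j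
  · right
    refine ⟨?_, ?_, ?_⟩
    · rintro i j hij u v rfl rfl; exact h1 i j hij
    · rintro i j hij u v rfl rfl; exact h2 i j hij
    · rintro i j u v rfl rfl; exact hs i j

theorem core (h : Start S k a c) (hp : CPerf S k a c) :
    ∃ (τ : ℕ) (a' c' : Fin k → Fin n), Start (shift S τ) k a' c' ∧ CPerf (shift S τ) k a' c' ∧
      ((∀ i j, fa (shift S τ) k (a' i) < fc (shift S τ) k (c' j)) ∨
       (∀ i j, fc (shift S τ) k (c' i) < fa (shift S τ) k (a' j))) := by
  have hk := h.hk
  have h0 : shift S ((0 : ℕ) : ℤ) = S := by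
    cases S
    simp [shift]
  by_cases hs : (∀ i j, fa S k (a i) < fc S k (c j)) ∨ (∀ i j, fc S k (c i) < fa S k (a j))
  · refine ⟨0, a, c, ?_⟩
    rw [h0]
    exact ⟨h, hp, hs⟩
  push Not at hs
  obtain ⟨⟨i1, j1, hs1⟩, ⟨j2, i2, hs2⟩⟩ := hs
  let K : Fin k := ⟨k - 1, by have := i1.2; omega⟩
  have hK : ∀ i, i ≤ K := fun i => by
    have := i.2
    simp only [K, Fin.le_def]; omega
  have ma : ∀ i, fa S k (a i) ≤ fa S k (a K) := fun i => by
    rcases (hK i).lt_or_eq with h' | h'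
    · exact (h.fa_mono hp.nconf h').le
    · rw [h']
  have mc : ∀ i, fc S k (c i) ≤ fc S k (c K) := fun i => by
    rcases (hK i).lt_or_eq with h' | h'
    · exact (h.fc_mono hp.nconf h').le
    · rw [h']
  rcases lt_or_gt_of_ne (h.fa_ne_fc K K) with hlt | hlt
  · obtain ⟨τ, c', g1, g2, g3⟩ := main_clean h.mir (hp.mir hk) K hK
      (by rw [fa_mir hk, fc_mir hk]; exact hlt)
      ⟨j1, by
        rw [fa_mir hk, fc_mir hk]
        have := h.fa_ne_fc i1 j1
        have := ma i1
        omega⟩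
    have e : shift (mir S) (τ : ℤ) = mir (shift S (τ : ℤ)) := rfl
    rw [e] at g1 g2 g3
    have g1' := g1.mir
    have g2' := g2.mir hk
    rw [mir_mir] at g1' g2'
    refine ⟨τ, a, c', g1', g2', Or.inl fun i j => ?_⟩
    have := g3 i j
    rwa [fa_mir hk, fc_mir hk] at this
  · obtain ⟨τ, a', g1, g2, g3⟩ := main_clean h hp K hK hlt
      ⟨i2, by
        have := h.fa_ne_fc i2 j2
        have := mc j2
        omega⟩
    exact ⟨τ, a', c, g1, g2, Or.inr g3⟩

end Pf

/-- Let `k < n/2` and suppose `Π` is a perfect `n`-half-period of an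
allowable sequence `𝚷`, with initial arrangement `(a_k, …, a_1, b_1, …, b_m, c_1, …, c_k)`,
`m = n - 2k`. Then `𝚷` contains a perfect `n`-half-period `Π'` with initial arrangement
`(a'_k, …, a'_1, b'_1, …, b'_m, c'_1, …, c'_k)` whose liberation sequence is either
`a'_1 a'_2 … a'_k c'_1 c'_2 … c'_k` or `c'_1 c'_2 … c'_k a'_1 a'_2 … a'_k`. -/
theorem exists_perfect_halfPeriod_sorted_liberation (n k : ℕ) (hk : 2 * k < n)
    (S : AllowableSeq n) (hp : HalfPeriod n) (hmem : S.Contains hp)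
    (a : Fin k → Fin n) (b : Fin (n - 2 * k) → Fin n) (c : Fin k → Fin n)
    (hstart : StandardStart hp k a b c)
    (hperf : PerfectHalfPeriod hp k a c) :
    ∃ (hp' : HalfPeriod n) (a' : Fin k → Fin n) (b' : Fin (n - 2 * k) → Fin n)
      (c' : Fin k → Fin n),
      S.Contains hp' ∧ StandardStart hp' k a' b' c' ∧ PerfectHalfPeriod hp' k a' c' ∧
      (((∀ i j : Fin k, i < j → ∀ u v,
            AFreedAt hp' k (a' i) u → AFreedAt hp' k (a' j) v → u < v) ∧
        (∀ i j : Fin k, i < j → ∀ u v,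
            CFreedAt hp' k (c' i) u → CFreedAt hp' k (c' j) v → u < v) ∧
        (∀ i j : Fin k, ∀ u v,
            AFreedAt hp' k (a' i) u → CFreedAt hp' k (c' j) v → u < v)) ∨
       ((∀ i j : Fin k, i < j → ∀ u v,
            AFreedAt hp' k (a' i) u → AFreedAt hp' k (a' j) v → u < v) ∧
        (∀ i j : Fin k, i < j → ∀ u v,
            CFreedAt hp' k (c' i) u → CFreedAt hp' k (c' j) v → u < v) ∧
        (∀ i j : Fin k, ∀ u v,
            CFreedAt hp' k (c' i) u → AFreedAt hp' k (a' j) v → u < v))) := by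
  obtain ⟨t₀, ht₀⟩ := hmem
  have H : ∀ t ≤ Pf.NN n, ∀ x, hp.pos t x = Pf.P (Pf.shift S t₀) t x := ht₀
  have h : Pf.Start (Pf.shift S t₀) k a c := by
    refine ⟨hk, fun i => ?_, fun i => ?_⟩
    · rw [← H 0 (Nat.zero_le _)]; exact hstart.2.1 i
    · rw [← H 0 (Nat.zero_le _)]; exact hstart.2.2.2 i
  obtain ⟨τ, a', c', h1, h2, h3⟩ := Pf.core h ((Pf.T_perf h H).1 hperf)
  obtain ⟨b', hb'⟩ := Pf.exists_b h1
  have H' : ∀ t ≤ Pf.NN n, ∀ x, (Pf.ofSeq (Pf.shift (Pf.shift S t₀) τ)).pos t x =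
      Pf.P (Pf.shift (Pf.shift S t₀) τ) t x := fun _ _ _ => rfl
  refine ⟨Pf.ofSeq (Pf.shift (Pf.shift S t₀) τ), a', b', c', ⟨t₀ + τ, fun t _ x => ?_⟩, hb',
    (Pf.T_perf h1 H').2 h2, Pf.finish h1 H' h2.nconf h3⟩
  rw [add_assoc]
  rfl
end

section
/- Let π_{a_10} be the arrangement of Π immediately after the swap in which a_10 enters the 13-center. Then in π_{a_10}: positions 1–10 are occupied by the elements of B, positions 21–30 by the elements of C, position 14 by a_10, positions 15, 16, 17 by a_7, a_8, a_9 in some order, positions 11, 12, 13 respectively by elements a_u with u ≤ 4, u ≤ 5, u ≤ 6, and positions 18, 19, 20 respectively by elements a_u with u ≤ 6, u ≤ 5, u ≤ 4. -/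
/-- `hp` is a 3-decomposable `30`-half-period, witnessed by the labeling
`A = {a 0, …, a 9}`, `B = {b 0, …, b 9}`, `C = {c 0, …, c 9}` (the element with
1-indexed subscript `j` is `a (j-1)`, etc.): the initial arrangement is
`(a_10, a_9, …, a_1, b_1, …, b_10, c_1, …, c_10)`, every transposition between `A`
and `B` occurs before every transposition between `C` and `A ∪ B`, and every
transposition between `A` and `C` occurs before every transposition between `B`
and `C`. -/
def IsThreeDecompLabeling30 (hp : HalfPeriod 30) (a b c : Fin 10 → Fin 30) : Prop :=
  Function.Injective (Sum.elim a (Sum.elim b c)) ∧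
  (∀ i : Fin 10, hp.pos 0 (a i) = 10 - (i : ℕ)) ∧
  (∀ i : Fin 10, hp.pos 0 (b i) = 11 + (i : ℕ)) ∧
  (∀ i : Fin 10, hp.pos 0 (c i) = 21 + (i : ℕ)) ∧
  (∀ s t, s < HalfPeriod.steps 30 → t < HalfPeriod.steps 30 →
    (∃ i j, hp.SwapsAt s (a i) (b j)) →
    (∃ i x, ((∃ j, x = a j) ∨ (∃ j, x = b j)) ∧ hp.SwapsAt t (c i) x) → s < t) ∧
  (∀ s t, s < HalfPeriod.steps 30 → t < HalfPeriod.steps 30 →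
    (∃ i j, hp.SwapsAt s (a i) (c j)) →
    (∃ i j, hp.SwapsAt t (b i) (c j)) → s < t)

/-- `x` and `y` belong to the same one of the three classes `A`, `B`, `C`. -/
def SameClass (a b c : Fin 10 → Fin 30) (x y : Fin 30) : Prop :=
  (∃ i j, x = a i ∧ y = a j) ∨ (∃ i j, x = b i ∧ y = b j) ∨ (∃ i j, x = c i ∧ y = c j)
/-- Position `p` lies in the `k`-center (positions `k+1, …, 30-k`) of a `30`-half-period. -/
def InCenter (k p : ℕ) : Prop := k + 1 ≤ p ∧ p ≤ 30 - k

/-- Step `t` is the (first) swap in which element `x` enters the `k`-center. -/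
def EntersCenterAt (hp : HalfPeriod 30) (k : ℕ) (x : Fin 30) (t : ℕ) : Prop :=
  t < HalfPeriod.steps 30 ∧ InCenter k (hp.pos (t + 1) x) ∧ ¬ InCenter k (hp.pos t x) ∧
    ∀ s < t, ¬ (InCenter k (hp.pos (s + 1) x) ∧ ¬ InCenter k (hp.pos s x))

/-- Step `t` is the (last) swap in which element `x` leaves the `k`-center. -/
def LeavesCenterAt (hp : HalfPeriod 30) (k : ℕ) (x : Fin 30) (t : ℕ) : Prop :=
  t < HalfPeriod.steps 30 ∧ InCenter k (hp.pos t x) ∧ ¬ InCenter k (hp.pos (t + 1) x) ∧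
    ∀ s, t < s → s < HalfPeriod.steps 30 →
      ¬ (InCenter k (hp.pos s x) ∧ ¬ InCenter k (hp.pos (s + 1) x))


structure Sys (p : ℕ → Fin 30 → ℕ) (L R : ℕ → Fin 30) : Prop where
  mem : ∀ t, t ≤ 435 → ∀ x, 1 ≤ p t x ∧ p t x ≤ 30
  inj : ∀ t, t ≤ 435 → ∀ x y, p t x = p t y → x = y
  s1 : ∀ t, t < 435 → p t (R t) = p t (L t) + 1
  s2 : ∀ t, t < 435 → p (t + 1) (L t) = p t (L t) + 1
  s3 : ∀ t, t < 435 → p (t + 1) (R t) = p t (L t)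
  s4 : ∀ t, t < 435 → ∀ z, z ≠ L t → z ≠ R t → p (t + 1) z = p t z
  rev : ∀ x, p 435 x = 31 - p 0 x

namespace Sys

variable {p : ℕ → Fin 30 → ℕ} {L R : ℕ → Fin 30}

theorem step_lt (h : Sys p L R) {t : ℕ} (ht : t < 435) {x y : Fin 30} (hxy : p t x < p t y)
    (hn : ¬ (L t = x ∧ R t = y)) : p (t + 1) x < p (t + 1) y := by
  have s1 := h.s1 t ht
  have s2 := h.s2 t ht
  have s3 := h.s3 t ht
  have s4x := h.s4 t ht x
  have s4y := h.s4 t ht y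
  have ix := h.inj t ht.le x (R t)
  have ix' := h.inj t ht.le x (L t)
  have iy := h.inj t ht.le y (R t)
  have iy' := h.inj t ht.le y (L t)
  grind

theorem exists_swap (h : Sys p L R) {x y : Fin 30} (hxy : p 0 x < p 0 y) :
    ∃ t, t < 435 ∧ L t = x ∧ R t = y := by
  by_contra hc
  push Not at hc
  have key : ∀ t, t ≤ 435 → p t x < p t y := by
    intro t
    induction t with
    | zero => intro _; exact hxy
    | succ t ih =>
      intro ht
      exact h.step_lt (by omega) (ih (by omega)) (fun hh => hc t (by omega) hh.1 hh.2)
  have h1 := key 435 le_rfl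
  rw [h.rev, h.rev] at h1
  have h2 := h.mem 0 (by omega) x
  have h3 := h.mem 0 (by omega) y
  omega

theorem card_P (h : Sys p L R) :
    (Finset.univ.filter (fun z : Fin 30 × Fin 30 => p 0 z.1 < p 0 z.2)).card = 435 := by
  set P := Finset.univ.filter (fun z : Fin 30 × Fin 30 => p 0 z.1 < p 0 z.2) with hP
  set Q := Finset.univ.filter (fun z : Fin 30 × Fin 30 => p 0 z.2 < p 0 z.1) with hQ
  have h1 : P.card = Q.card := by
    apply Finset.card_bij (fun z _ => (z.2, z.1))
    · intro z hz; simpa [hP, hQ] using hz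
    · rintro ⟨a, b⟩ _ ⟨c, d⟩ _ hh; simp at hh ⊢; tauto
    · rintro ⟨a, b⟩ hz; exact ⟨(b, a), by simpa [hP, hQ] using hz, rfl⟩
  have h2 : Disjoint P Q := by
    rw [Finset.disjoint_left]; intro z hz hz'
    simp [hP, hQ] at hz hz'; omega
  have h3 : P ∪ Q = (Finset.univ : Finset (Fin 30)).offDiag := by
    ext ⟨a, b⟩
    simp only [hP, hQ, Finset.mem_union, Finset.mem_filter, Finset.mem_univ, true_and,
      Finset.mem_offDiag]
    constructor
    · rintro hh rfl; omega
    · intro hh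
      have : p 0 a ≠ p 0 b := fun e => hh (h.inj 0 (by omega) a b e)
      omega
  have h4 := Finset.card_union_of_disjoint h2
  rw [h3, Finset.offDiag_card] at h4
  simp at h4
  omega

theorem image_eq (h : Sys p L R) :
    Finset.univ.filter (fun z : Fin 30 × Fin 30 => p 0 z.1 < p 0 z.2) =
      (Finset.range 435).image (fun t => (L t, R t)) := by
  apply Finset.eq_of_subset_of_card_le
  · rintro ⟨x, y⟩ hz
    simp only [Finset.mem_filter, Finset.mem_univ, true_and] at hz
    obtain ⟨t, ht, h1, h2⟩ := h.exists_swap hz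
    exact Finset.mem_image.2 ⟨t, Finset.mem_range.2 ht, by simp [h1, h2]⟩
  · rw [h.card_P]
    exact Finset.card_image_le.trans (by simp)

theorem q_lt (h : Sys p L R) {t : ℕ} (ht : t < 435) : p 0 (L t) < p 0 (R t) := by
  have : (L t, R t) ∈ (Finset.range 435).image (fun t => (L t, R t)) :=
    Finset.mem_image.2 ⟨t, Finset.mem_range.2 ht, rfl⟩
  rw [← h.image_eq] at this
  simpa using this

theorem uniq (h : Sys p L R) {s t : ℕ} (hs : s < 435) (ht : t < 435) (h1 : L s = L t)
    (h2 : R s = R t) : s = t := by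
  have hc : ((Finset.range 435).image (fun t => (L t, R t))).card = (Finset.range 435).card := by
    rw [← h.image_eq, h.card_P]; simp
  have := Finset.card_image_iff.1 hc
  exact this (by simpa using hs) (by simpa using ht) (by simp [h1, h2])

/-- order characterisation -/
theorem order (h : Sys p L R) {τ : ℕ} (hτ : τ < 435) {s : ℕ} (hs : s ≤ 435) :
    (p s (L τ) < p s (R τ) ↔ s ≤ τ) := by
  have A : ∀ s, s ≤ τ → p s (L τ) < p s (R τ) := by
    intro s
    induction s with
    | zero => intro _; exact h.q_lt hτ
    | succ s ih =>
      intro hs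
      apply h.step_lt (by omega) (ih (by omega))
      rintro ⟨h1, h2⟩
      have := h.uniq (by omega) hτ h1 h2
      omega
  have B : ∀ s, τ + 1 ≤ s → s ≤ 435 → p s (R τ) < p s (L τ) := by
    intro s hs
    induction s, hs using Nat.le_induction with
    | base => intro _; rw [h.s2 τ hτ, h.s3 τ hτ]; omega
    | succ s hs ih =>
      intro hs'
      apply h.step_lt (by omega) (ih (by omega))
      rintro ⟨h1, h2⟩
      have h3 := h.q_lt (t := s) (by omega)
      have h4 := h.q_lt hτ
      rw [h1, h2] at h3
      omega
  constructor
  · intro hh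
    by_contra hc
    have := B s (by omega) hs
    omega
  · exact A s

/-- the swap of a pair still in order at time `s` happens at or after `s` -/
theorem future (h : Sys p L R) {x y : Fin 30} {s : ℕ} (hs : s ≤ 435) (hq : p 0 x < p 0 y)
    (hxy : p s x < p s y) : ∃ τ, s ≤ τ ∧ τ < 435 ∧ L τ = x ∧ R τ = y := by
  obtain ⟨τ, hτ, rfl, rfl⟩ := h.exists_swap hq
  exact ⟨τ, (h.order hτ hs).1 hxy, hτ, rfl, rfl⟩

theorem past (h : Sys p L R) {x y : Fin 30} {s : ℕ} (hs : s ≤ 435) (hq : p 0 x < p 0 y)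
    (hxy : p s y < p s x) : ∃ τ, τ < s ∧ τ < 435 ∧ L τ = x ∧ R τ = y := by
  obtain ⟨τ, hτ, rfl, rfl⟩ := h.exists_swap hq
  refine ⟨τ, ?_, hτ, rfl, rfl⟩
  by_contra hc
  have := (h.order hτ hs).2 (by omega)
  omega

end Sys

/-- step `t` is inside the `k`-center -/
def Cen (p : ℕ → Fin 30 → ℕ) (L : ℕ → Fin 30) (k t : ℕ) : Prop :=
  k + 1 ≤ p t (L t) ∧ p t (L t) + 1 ≤ 30 - k

instance (p : ℕ → Fin 30 → ℕ) (L : ℕ → Fin 30) (k t : ℕ) : Decidable (Cen p L k t) := by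
  unfold Cen; infer_instance

/-- clamp -/
def clp (k v : ℕ) : ℤ := max (k + 1 : ℤ) (min (v : ℤ) (30 - k))

namespace Sys

variable {p : ℕ → Fin 30 → ℕ} {L R : ℕ → Fin 30}

theorem clp_step (h : Sys p L R) {k : ℕ} (hk : k ≤ 14) {t : ℕ} (ht : t < 435) (x : Fin 30) :
    clp k (p (t + 1) x) - clp k (p t x) =
      (if Cen p L k t ∧ L t = x then 1 else 0) - (if Cen p L k t ∧ R t = x then 1 else 0) := by
  have s1 := h.s1 t ht
  have s2 := h.s2 t ht
  have s3 := h.s3 t ht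
  have s4x := h.s4 t ht x
  have hne : L t ≠ R t := by intro e; rw [← e] at s1; omega
  unfold clp Cen
  by_cases hx : L t = x
  · subst hx
    have : ¬ (R t = L t) := fun e => hne e.symm
    simp only [this, and_false, and_true, if_false, s2]
    split_ifs <;> omega
  · by_cases hx' : R t = x
    · subst hx'
      simp only [hx, and_false, and_true, if_false, s1, s3]
      split_ifs <;> omega
    · simp only [hx, hx', and_false, if_false, s4x (Ne.symm hx) (Ne.symm hx')]
      omega

theorem tele_future (h : Sys p L R) {k : ℕ} (hk : k ≤ 14) {s : ℕ} (hs : s ≤ 435) (x : Fin 30) :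
    clp k (p 435 x) - clp k (p s x) =
      (((Finset.range 435).filter (fun t => s ≤ t ∧ Cen p L k t ∧ L t = x)).card : ℤ) -
      (((Finset.range 435).filter (fun t => s ≤ t ∧ Cen p L k t ∧ R t = x)).card : ℤ) := by
  set W : ℕ → ℤ := fun r => if r ≤ s then clp k (p s x) else clp k (p r x) with hW
  have h1 := Finset.sum_range_sub W 435
  have h2 : W 435 - W 0 = clp k (p 435 x) - clp k (p s x) := by
    simp only [hW]
    by_cases h0 : 435 ≤ s
    · have : s = 435 := by omega
      simp [this]
    · simp [h0]
  rw [← h2, ← h1, Finset.card_filter, Finset.card_filter]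
  push_cast
  rw [← Finset.sum_sub_distrib]
  apply Finset.sum_congr rfl
  intro t ht
  have hst := h.clp_step hk (Finset.mem_range.1 ht) x
  simp only [hW]
  by_cases hts : s ≤ t
  · have e1 : ¬ (t + 1 ≤ s) := by omega
    have e2 : (if t ≤ s then clp k (p s x) else clp k (p t x)) = clp k (p t x) := by
      split_ifs with h5
      · have : s = t := by omega
        rw [this]
      · rfl
    simp only [e1, e2, if_false, hts, true_and]
    exact hst
  · have e1 : t + 1 ≤ s := by omega
    have e2 : t ≤ s := by omega
    simp [e1, e2, hts]

theorem tele_past (h : Sys p L R) {k : ℕ} (hk : k ≤ 14) {s : ℕ} (hs : s ≤ 435) (x : Fin 30) :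
    clp k (p s x) - clp k (p 0 x) =
      (((Finset.range 435).filter (fun t => t < s ∧ Cen p L k t ∧ L t = x)).card : ℤ) -
      (((Finset.range 435).filter (fun t => t < s ∧ Cen p L k t ∧ R t = x)).card : ℤ) := by
  set W : ℕ → ℤ := fun r => if r ≤ s then clp k (p r x) else clp k (p s x) with hW
  have h1 := Finset.sum_range_sub W 435
  have h2 : W 435 - W 0 = clp k (p s x) - clp k (p 0 x) := by
    simp only [hW]
    by_cases h0 : 435 ≤ s
    · have : s = 435 := by omega
      simp [this]
    · simp [h0]
  rw [← h2, ← h1, Finset.card_filter, Finset.card_filter]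
  push_cast
  rw [← Finset.sum_sub_distrib]
  apply Finset.sum_congr rfl
  intro t ht
  have hst := h.clp_step hk (Finset.mem_range.1 ht) x
  simp only [hW]
  by_cases hts : t < s
  · have e1 : t + 1 ≤ s := by omega
    have e2 : t ≤ s := by omega
    simp only [e1, e2, if_true, hts, true_and]
    exact hst
  · have e1 : ¬ (t + 1 ≤ s) := by omega
    have e2 : (if t ≤ s then clp k (p t x) else clp k (p s x)) = clp k (p s x) := by
      split_ifs with h5
      · have : s = t := by omega
        rw [this]
      · rfl
    simp only [e1, e2, if_false, hts, false_and, sub_self]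

end Sys

def Hm (L R : ℕ → Fin 30) (T t : ℕ) : Fin 30 := if t < T then R t else L t
def Gm (L R : ℕ → Fin 30) (T t : ℕ) : Fin 30 := if t < T then L t else R t
def fb (k r : ℕ) : ℕ := min (10 - r) (29 - 2 * k + (r - 1))

/-- A class together with its reference time. -/
structure Cls (p : ℕ → Fin 30 → ℕ) (L R : ℕ → Fin 30) (T : ℕ) (X : Finset (Fin 30)) : Prop where
  hT : T ≤ 435
  card : X.card = 10
  low : ∀ x ∈ X, p T x ≤ 10
  cl : ∀ t, t < 435 → Gm L R T t ∈ X → Hm L R T t ∈ X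

namespace Sys

variable {p : ℕ → Fin 30 → ℕ} {L R : ℕ → Fin 30} {T : ℕ} {X : Finset (Fin 30)} {k : ℕ}

theorem HG_lt (h : Sys p L R) (hT : T ≤ 435) {t : ℕ} (ht : t < 435) :
    p T (Hm L R T t) < p T (Gm L R T t) := by
  have h1 := h.order ht hT
  have h2 : p T (L t) ≠ p T (R t) := by
    intro e
    have := h.inj T hT _ _ e
    have h3 := h.q_lt ht
    rw [this] at h3; omega
  unfold Hm Gm
  split_ifs with h3 <;> omega

theorem HG_uniq (h : Sys p L R) {s t : ℕ} (hs : s < 435) (ht : t < 435)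
    (h1 : Hm L R T s = Hm L R T t) (h2 : Gm L R T s = Gm L R T t) : s = t := by
  have q1 := h.q_lt hs
  have q2 := h.q_lt ht
  unfold Hm at h1
  unfold Gm at h2
  split_ifs at h1 h2
  · exact h.uniq hs ht h2 h1
  · rw [h1, h2] at q1; omega
  · rw [h1, h2] at q1; omega
  · exact h.uniq hs ht h1 h2

theorem O_eq (h : Sys p L R) (hT : T ≤ 435) (hk : 10 ≤ k) (hk' : k ≤ 14) {x : Fin 30}
    (hx : p T x ≤ 10) :
    ((Finset.range 435).filter (fun t => Cen p L k t ∧ Hm L R T t = x)).card =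
    ((Finset.range 435).filter (fun t => Cen p L k t ∧ Gm L R T t = x)).card + (29 - 2 * k) := by
  have h1 := h.tele_future hk' hT x
  have h2 := h.tele_past hk' hT x
  have e1 : ((Finset.range 435).filter (fun t => Cen p L k t ∧ Hm L R T t = x)).card =
      ((Finset.range 435).filter (fun t => t < T ∧ Cen p L k t ∧ R t = x)).card +
      ((Finset.range 435).filter (fun t => T ≤ t ∧ Cen p L k t ∧ L t = x)).card := by
    rw [Finset.card_filter, Finset.card_filter, Finset.card_filter, ← Finset.sum_add_distrib]
    apply Finset.sum_congr rfl
    intro t _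
    unfold Hm
    by_cases h3 : t < T
    · have : ¬ (T ≤ t) := by omega
      simp [h3, this]
    · have : T ≤ t := by omega
      simp [h3, this]
  have e2 : ((Finset.range 435).filter (fun t => Cen p L k t ∧ Gm L R T t = x)).card =
      ((Finset.range 435).filter (fun t => t < T ∧ Cen p L k t ∧ L t = x)).card +
      ((Finset.range 435).filter (fun t => T ≤ t ∧ Cen p L k t ∧ R t = x)).card := by
    rw [Finset.card_filter, Finset.card_filter, Finset.card_filter, ← Finset.sum_add_distrib]
    apply Finset.sum_congr rfl
    intro t _
    unfold Gm
    by_cases h3 : t < T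
    · have : ¬ (T ≤ t) := by omega
      simp [h3, this]
    · have : T ≤ t := by omega
      simp [h3, this]
  have h3 : clp k (p 435 x) + clp k (p 0 x) - 2 * clp k (p T x) = 29 - 2 * k := by
    rw [h.rev]
    have := h.mem 0 (by omega) x
    unfold clp
    omega
  rw [e1, e2]
  omega

theorem below_card (h : Sys p L R) (hT : T ≤ 435) (x : Fin 30) :
    (Finset.univ.filter (fun y => p T y < p T x)).card ≤ p T x - 1 := by
  have := Finset.card_le_card_of_injOn (s := Finset.univ.filter (fun y => p T y < p T x))
    (t := Finset.Ico 1 (p T x)) (p T)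
    (by
      intro y hy
      have := h.mem T hT y
      simp at hy ⊢
      omega)
    (by
      intro y _ z _ e
      exact h.inj T hT y z e)
  simpa using this

theorem above_card (h : Sys p L R) (hX : Cls p L R T X) (x : Fin 30) :
    (X.filter (fun y => p T x < p T y)).card ≤ 10 - p T x := by
  have := Finset.card_le_card_of_injOn (s := X.filter (fun y => p T x < p T y))
    (t := Finset.Ioc (p T x) 10) (p T)
    (by
      intro y hy
      simp at hy ⊢
      have := hX.low y hy.1
      omega)
    (by
      intro y _ z _ e
      exact h.inj T hX.hT y z e)
  simpa using this

theorem in_image (h : Sys p L R) (hT : T ≤ 435) (x : Fin 30) :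
    ((Finset.range 435).filter (fun t => Cen p L k t ∧ Gm L R T t = x)).image (Hm L R T) ⊆
      Finset.univ.filter (fun y => p T y < p T x) := by
  intro y hy
  simp only [Finset.mem_image, Finset.mem_filter, Finset.mem_range] at hy
  obtain ⟨t, ⟨ht, _, h1⟩, rfl⟩ := hy
  have := h.HG_lt hT ht
  simp [← h1, this]

theorem in_image_card (h : Sys p L R) (x : Fin 30) :
    (((Finset.range 435).filter (fun t => Cen p L k t ∧ Gm L R T t = x)).image (Hm L R T)).card
    = ((Finset.range 435).filter (fun t => Cen p L k t ∧ Gm L R T t = x)).card := by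
  apply Finset.card_image_of_injOn
  intro s hs t ht e
  simp at hs ht
  exact h.HG_uniq hs.1 ht.1 e (by rw [hs.2.2, ht.2.2])

theorem out_image (h : Sys p L R) (hT : T ≤ 435) (x : Fin 30) :
    ((Finset.range 435).filter (fun t => Cen p L k t ∧ Hm L R T t = x ∧ Gm L R T t ∈ X)).image
      (Gm L R T) ⊆ X.filter (fun y => p T x < p T y) := by
  intro y hy
  simp only [Finset.mem_image, Finset.mem_filter, Finset.mem_range] at hy
  obtain ⟨t, ⟨ht, _, h1, h2⟩, rfl⟩ := hy
  have := h.HG_lt hT ht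
  simp [← h1, this, h2]

theorem out_image_card (h : Sys p L R) (x : Fin 30) :
    (((Finset.range 435).filter (fun t => Cen p L k t ∧ Hm L R T t = x ∧ Gm L R T t ∈ X)).image
      (Gm L R T)).card =
    ((Finset.range 435).filter (fun t => Cen p L k t ∧ Hm L R T t = x ∧ Gm L R T t ∈ X)).card := by
  apply Finset.card_image_of_injOn
  intro s hs t ht e
  simp at hs ht
  exact h.HG_uniq hs.1 ht.1 (by rw [hs.2.2.1, ht.2.2.1]) e

theorem out_le_O (x : Fin 30) :
    ((Finset.range 435).filter (fun t => Cen p L k t ∧ Hm L R T t = x ∧ Gm L R T t ∈ X)).card ≤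
    ((Finset.range 435).filter (fun t => Cen p L k t ∧ Hm L R T t = x)).card := by
  apply Finset.card_le_card
  intro t
  simp only [Finset.mem_filter]
  tauto

theorem out_le (h : Sys p L R) (hX : Cls p L R T X) (hk : 10 ≤ k) (hk' : k ≤ 14) {x : Fin 30}
    (hx : x ∈ X) :
    ((Finset.range 435).filter (fun t => Cen p L k t ∧ Hm L R T t = x ∧ Gm L R T t ∈ X)).card ≤
      fb k (p T x) := by
  have h1 := h.O_eq hX.hT hk hk' (hX.low x hx)
  have h2 := (h.in_image_card (k := k) (T := T) x).symm.le.trans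
    ((Finset.card_le_card (h.in_image hX.hT x)).trans (h.below_card hX.hT x))
  have h3 := (h.out_image_card (k := k) (T := T) (X := X) x).symm.le.trans
    ((Finset.card_le_card (h.out_image hX.hT x)).trans (h.above_card hX x))
  have h4 := out_le_O (p := p) (L := L) (R := R) (T := T) (X := X) (k := k) x
  unfold fb
  omega

theorem sum_out :
    ∑ x ∈ X, ((Finset.range 435).filter
      (fun t => Cen p L k t ∧ Hm L R T t = x ∧ Gm L R T t ∈ X)).card =
    ((Finset.range 435).filter (fun t => Cen p L k t ∧ Hm L R T t ∈ X ∧ Gm L R T t ∈ X)).card := by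
  rw [Finset.card_eq_sum_card_fiberwise (f := Hm L R T) (t := X)]
  · apply Finset.sum_congr rfl
    intro x hx
    congr 1
    ext t
    simp only [Finset.mem_filter]
    constructor
    · rintro ⟨h1, h2, rfl, h3⟩; exact ⟨⟨h1, h2, hx, h3⟩, rfl⟩
    · rintro ⟨⟨h1, h2, _, h3⟩, rfl⟩; exact ⟨h1, h2, rfl, h3⟩
  · intro t ht
    simp at ht
    exact ht.2.2.1

theorem sum_fib (F : ℕ → Fin 30) :
    ∑ x ∈ X, ((Finset.range 435).filter (fun t => Cen p L k t ∧ F t = x)).card =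
    ((Finset.range 435).filter (fun t => Cen p L k t ∧ F t ∈ X)).card := by
  rw [Finset.card_eq_sum_card_fiberwise (f := F) (t := X)]
  · apply Finset.sum_congr rfl
    intro x hx
    congr 1
    ext t
    simp only [Finset.mem_filter]
    constructor
    · rintro ⟨h1, h2, rfl⟩; exact ⟨⟨h1, h2, hx⟩, rfl⟩
    · rintro ⟨⟨h1, h2, _⟩, rfl⟩; exact ⟨h1, h2, rfl⟩
  · intro t ht
    simp at ht
    exact ht.2.2

theorem sum_fb (h : Sys p L R) (hX : Cls p L R T X) :
    ∑ x ∈ X, fb k (p T x) = ∑ r ∈ Finset.Icc 1 10, fb k r := by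
  have hinj : Set.InjOn (p T) (X : Set (Fin 30)) := fun y _ z _ e => h.inj T hX.hT y z e
  have : X.image (p T) = Finset.Icc 1 10 := by
    apply Finset.eq_of_subset_of_card_le
    · intro v hv
      obtain ⟨y, hy, rfl⟩ := Finset.mem_image.1 hv
      exact Finset.mem_Icc.2 ⟨(h.mem T hX.hT y).1, hX.low y hy⟩
    · rw [Finset.card_image_of_injOn hinj, hX.card]; simp
  rw [← this, Finset.sum_image hinj]

theorem mono_iff (t : ℕ) : (Hm L R T t ∈ X ∧ Gm L R T t ∈ X) ↔ (L t ∈ X ∧ R t ∈ X) := by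
  unfold Hm Gm; split_ifs <;> tauto

theorem mono_filter :
    (Finset.range 435).filter (fun t => Cen p L k t ∧ Hm L R T t ∈ X ∧ Gm L R T t ∈ X) =
    (Finset.range 435).filter (fun t => Cen p L k t ∧ L t ∈ X ∧ R t ∈ X) := by
  apply Finset.filter_congr
  intro t _
  rw [mono_iff]

theorem class_le (h : Sys p L R) (hX : Cls p L R T X) (hk : 10 ≤ k) (hk' : k ≤ 14) :
    ((Finset.range 435).filter (fun t => Cen p L k t ∧ L t ∈ X ∧ R t ∈ X)).card ≤
      ∑ r ∈ Finset.Icc 1 10, fb k r := by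
  rw [← mono_filter (T := T), ← sum_out, ← h.sum_fb hX]
  exact Finset.sum_le_sum (fun x hx => h.out_le hX hk hk' hx)

theorem class_bich (h : Sys p L R) (hX : Cls p L R T X) (hk : 10 ≤ k) (hk' : k ≤ 14) :
    ((Finset.range 435).filter (fun t => Cen p L k t ∧
      ((L t ∈ X ∧ R t ∉ X) ∨ (L t ∉ X ∧ R t ∈ X)))).card = 10 * (29 - 2 * k) := by
  have h1 : ∑ x ∈ X, ((Finset.range 435).filter (fun t => Cen p L k t ∧ Hm L R T t = x)).card =
    ∑ x ∈ X, (((Finset.range 435).filter (fun t => Cen p L k t ∧ Gm L R T t = x)).card +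
      (29 - 2 * k)) := Finset.sum_congr rfl (fun x hx => h.O_eq hX.hT hk hk' (hX.low x hx))
  rw [Finset.sum_add_distrib, sum_fib, sum_fib, Finset.sum_const, hX.card, smul_eq_mul] at h1
  have h2 : ((Finset.range 435).filter (fun t => Cen p L k t ∧ Hm L R T t ∈ X)).card =
    ((Finset.range 435).filter (fun t => Cen p L k t ∧ Gm L R T t ∈ X)).card +
    ((Finset.range 435).filter (fun t => Cen p L k t ∧
      ((L t ∈ X ∧ R t ∉ X) ∨ (L t ∉ X ∧ R t ∈ X)))).card := by
    rw [Finset.card_filter, Finset.card_filter, Finset.card_filter, ← Finset.sum_add_distrib]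
    apply Finset.sum_congr rfl
    intro t ht
    have := hX.cl t (Finset.mem_range.1 ht)
    unfold Hm Gm at this ⊢
    by_cases c1 : t < T
    · simp only [if_pos c1] at this ⊢
      clear h1
      by_cases c2 : L t ∈ X <;> by_cases c3 : R t ∈ X <;> simp_all
    · simp only [if_neg c1] at this ⊢
      clear h1
      by_cases c2 : L t ∈ X <;> by_cases c3 : R t ∈ X <;> simp_all
  omega

theorem class_eq (h : Sys p L R) (hX : Cls p L R T X) (hk : 10 ≤ k) (hk' : k ≤ 14)
    (he : ∑ r ∈ Finset.Icc 1 10, fb k r ≤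
      ((Finset.range 435).filter (fun t => Cen p L k t ∧ L t ∈ X ∧ R t ∈ X)).card)
    {t : ℕ} (ht : t < 435) (hH : Hm L R T t ∈ X) (hG : Gm L R T t ∈ X)
    (hc : fb k (p T (Hm L R T t)) = 10 - p T (Hm L R T t) ∨
      fb k (p T (Gm L R T t)) = 29 - 2 * k + (p T (Gm L R T t) - 1)) : Cen p L k t := by
  rw [← mono_filter (T := T), ← sum_out, ← h.sum_fb hX] at he
  have hle := fun x hx => h.out_le (k := k) hX hk hk' (x := x) hx
  have heq := (Finset.sum_eq_sum_iff_of_le hle).1 (le_antisymm (Finset.sum_le_sum hle) he)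
  have hlt := h.HG_lt hX.hT ht
  rcases hc with hc | hc
  · have e := heq _ hH
    rw [hc, ← h.out_image_card] at e
    have e2 := Finset.eq_of_subset_of_card_le
      (h.out_image (k := k) (X := X) hX.hT (Hm L R T t)) (by
        rw [e]; exact h.above_card hX _)
    have e3 : Gm L R T t ∈ X.filter (fun y => p T (Hm L R T t) < p T y) :=
      Finset.mem_filter.2 ⟨hG, hlt⟩
    rw [← e2] at e3
    simp only [Finset.mem_image, Finset.mem_filter, Finset.mem_range] at e3
    obtain ⟨s, ⟨hs, h1, h2, _⟩, h4⟩ := e3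
    have := h.HG_uniq hs ht h2 h4
    exact this ▸ h1
  · have e := heq _ hG
    have h1 := h.O_eq hX.hT hk hk' (hX.low _ hG)
    have h4 := out_le_O (p := p) (L := L) (R := R) (T := T) (X := X) (k := k) (Gm L R T t)
    have e2 := Finset.eq_of_subset_of_card_le
      (h.in_image (k := k) hX.hT (Gm L R T t)) (by
        rw [h.in_image_card]
        have := h.below_card hX.hT (Gm L R T t)
        omega)
    have e3 : Hm L R T t ∈ Finset.univ.filter (fun y => p T y < p T (Gm L R T t)) :=
      Finset.mem_filter.2 ⟨Finset.mem_univ _, hlt⟩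
    rw [← e2] at e3
    simp only [Finset.mem_image, Finset.mem_filter, Finset.mem_range] at e3
    obtain ⟨s, ⟨hs, h1, h2⟩, h4⟩ := e3
    have := h.HG_uniq hs ht h4 h2
    exact this ▸ h1

end Sys

/-- elements whose position at time `t` lies in `[lo, hi]` -/
def Rng (p : ℕ → Fin 30 → ℕ) (t lo hi : ℕ) : Finset (Fin 30) :=
  Finset.univ.filter (fun x => lo ≤ p t x ∧ p t x ≤ hi)

namespace Sys

variable {p : ℕ → Fin 30 → ℕ} {L R : ℕ → Fin 30}

theorem surj (h : Sys p L R) {t : ℕ} (ht : t ≤ 435) {v : ℕ} (h1 : 1 ≤ v) (h2 : v ≤ 30) :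
    ∃ x, p t x = v := by
  have : (Finset.univ : Finset (Fin 30)).image (p t) = Finset.Icc 1 30 := by
    apply Finset.eq_of_subset_of_card_le
    · intro v hv
      obtain ⟨y, _, rfl⟩ := Finset.mem_image.1 hv
      exact Finset.mem_Icc.2 (h.mem t ht y)
    · rw [Finset.card_image_of_injective _ (fun x y e => h.inj t ht x y e)]; simp
  have hv : v ∈ Finset.Icc 1 30 := Finset.mem_Icc.2 ⟨h1, h2⟩
  rw [← this] at hv
  obtain ⟨y, _, hy⟩ := Finset.mem_image.1 hv
  exact ⟨y, hy⟩

theorem card_Rng (h : Sys p L R) {t : ℕ} (ht : t ≤ 435) {lo hi : ℕ} (h1 : 1 ≤ lo) (h2 : hi ≤ 30) :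
    (Rng p t lo hi).card = hi + 1 - lo := by
  have e : (Rng p t lo hi).image (p t) = Finset.Icc lo hi := by
    ext v
    simp only [Rng, Finset.mem_image, Finset.mem_filter, Finset.mem_univ, true_and,
      Finset.mem_Icc]
    constructor
    · rintro ⟨x, hx, rfl⟩; exact hx
    · intro hv
      obtain ⟨x, rfl⟩ := h.surj ht (v := v) (by omega) (by omega)
      exact ⟨x, hv, rfl⟩
  rw [← Nat.card_Icc, ← e, Finset.card_image_of_injective _ (fun x y e => h.inj t ht x y e)]

theorem mem_Rng {t lo hi : ℕ} {x : Fin 30} : x ∈ Rng p t lo hi ↔ lo ≤ p t x ∧ p t x ≤ hi := by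
  simp [Rng]

theorem clsA (h : Sys p L R) : Cls p L R 0 (Rng p 0 1 10) where
  hT := by omega
  card := h.card_Rng (by omega) (by omega) (by omega)
  low := fun x hx => (mem_Rng.1 hx).2
  cl := by
    intro t ht
    have := h.q_lt ht
    have := h.mem 0 (by omega) (L t)
    simp only [Gm, Hm, mem_Rng, Nat.not_lt_zero, if_false]
    omega

theorem clsC (h : Sys p L R) : Cls p L R 435 (Rng p 0 21 30) where
  hT := by omega
  card := h.card_Rng (by omega) (by omega) (by omega)
  low := by
    intro x hx
    have := mem_Rng.1 hx
    rw [h.rev]; omega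
  cl := by
    intro t ht
    have := h.q_lt ht
    have := h.mem 0 (by omega) (R t)
    simp only [Gm, Hm, mem_Rng, ht, if_true]
    omega

theorem clsB (h : Sys p L R)
    (hD : ∀ s t, s < 435 → t < 435 → p 0 (L s) ≤ 10 → 11 ≤ p 0 (R s) → p 0 (R s) ≤ 20 →
      p 0 (L t) ≤ 20 → 21 ≤ p 0 (R t) → s < t) : ∃ T, Cls p L R T (Rng p 0 11 20) := by
  have hex : ∃ t, t < 435 ∧ p 0 (L t) ≤ 20 ∧ 21 ≤ p 0 (R t) := by
    obtain ⟨x, hx⟩ := h.surj (t := 0) (by omega) (v := 1) (by omega) (by omega)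
    obtain ⟨y, hy⟩ := h.surj (t := 0) (by omega) (v := 30) (by omega) (by omega)
    obtain ⟨t, ht, rfl, rfl⟩ := h.exists_swap (x := x) (y := y) (by omega)
    exact ⟨t, ht, by omega, by omega⟩
  obtain ⟨T, ⟨hT, hT1, hT2⟩, hmin⟩ : ∃ T, (T < 435 ∧ p 0 (L T) ≤ 20 ∧ 21 ≤ p 0 (R T)) ∧
      ∀ t, t < T → ¬ (t < 435 ∧ p 0 (L t) ≤ 20 ∧ 21 ≤ p 0 (R t)) :=
    ⟨Nat.find hex, Nat.find_spec hex, fun t ht => Nat.find_min hex ht⟩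
  refine ⟨T, hT.le, h.card_Rng (by omega) (by omega) (by omega), ?_, ?_⟩
  · intro x hx
    rw [mem_Rng] at hx
    have hx' := h.mem T hT.le x
    have hsub : Rng p 0 1 10 ∪ Rng p 0 21 30 ⊆ Rng p T (p T x + 1) 30 := by
      intro y hy
      rw [Finset.mem_union, mem_Rng, mem_Rng] at hy
      rw [mem_Rng]
      refine ⟨?_, (h.mem T hT.le y).2⟩
      rcases hy with hy | hy
      · obtain ⟨τ, hτ, rfl, rfl⟩ := h.exists_swap (x := y) (y := x) (by omega)
        have h1 := hD τ T hτ hT (by omega) (by omega) (by omega) hT1 hT2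
        have h2 := h.order hτ hT.le
        have h3 : p T (L τ) ≠ p T (R τ) := by
          intro e
          have := h.inj T hT.le _ _ e
          rw [this] at hy; omega
        omega
      · obtain ⟨τ, hτ, rfl, rfl⟩ := h.exists_swap (x := x) (y := y) (by omega)
        have h1 : T ≤ τ := by
          by_contra hc
          exact hmin τ (by omega) ⟨hτ, by omega, by omega⟩
        have h2 := h.order hτ hT.le
        omega
    have hc := Finset.card_le_card hsub
    rw [Finset.card_union_of_disjoint, h.card_Rng (by omega) (by omega) (by omega),
      h.card_Rng (by omega) (by omega) (by omega),
      h.card_Rng hT.le (by omega) (by omega)] at hc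
    · omega
    · rw [Finset.disjoint_left]
      intro y
      simp only [mem_Rng]; omega
  · intro t ht
    have h1 := h.q_lt ht
    have h2 := h.mem 0 (by omega) (L t)
    have h3 := hD t T ht hT
    have h4 := hmin t
    simp only [Gm, Hm]
    split_ifs with h5
    · simp only [mem_Rng]
      have := h4 h5
      omega
    · simp only [mem_Rng]
      intro h6
      by_contra h7
      have := h3 (by omega) (by omega) (by omega) hT1 hT2
      omega

theorem total (h : Sys p L R) {k : ℕ} (hk : 10 ≤ k) (hk' : k ≤ 14) {M : ℕ}
    (hM : ∑ r ∈ Finset.Icc 1 10, fb k r = M)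
    (hD : ∀ s t, s < 435 → t < 435 → p 0 (L s) ≤ 10 → 11 ≤ p 0 (R s) → p 0 (R s) ≤ 20 →
      p 0 (L t) ≤ 20 → 21 ≤ p 0 (R t) → s < t)
    (hN : 3 * M + 15 * (29 - 2 * k) ≤ ((Finset.range 435).filter (fun t => Cen p L k t)).card) :
    M ≤ ((Finset.range 435).filter
      (fun t => Cen p L k t ∧ L t ∈ Rng p 0 1 10 ∧ R t ∈ Rng p 0 1 10)).card := by
  obtain ⟨T, hB⟩ := h.clsB hD
  have b1 := h.class_bich h.clsA hk hk'
  have b2 := h.class_bich hB hk hk'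
  have b3 := h.class_bich h.clsC hk hk'
  have c2 := h.class_le hB hk hk'
  have c3 := h.class_le h.clsC hk hk'
  have key : 2 * ((Finset.range 435).filter (fun t => Cen p L k t)).card =
      2 * ((Finset.range 435).filter
        (fun t => Cen p L k t ∧ L t ∈ Rng p 0 1 10 ∧ R t ∈ Rng p 0 1 10)).card +
      2 * ((Finset.range 435).filter
        (fun t => Cen p L k t ∧ L t ∈ Rng p 0 11 20 ∧ R t ∈ Rng p 0 11 20)).card +
      2 * ((Finset.range 435).filter
        (fun t => Cen p L k t ∧ L t ∈ Rng p 0 21 30 ∧ R t ∈ Rng p 0 21 30)).card +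
      ((Finset.range 435).filter (fun t => Cen p L k t ∧
      ((L t ∈ Rng p 0 1 10 ∧ R t ∉ Rng p 0 1 10) ∨
        (L t ∉ Rng p 0 1 10 ∧ R t ∈ Rng p 0 1 10)))).card +
      ((Finset.range 435).filter (fun t => Cen p L k t ∧
      ((L t ∈ Rng p 0 11 20 ∧ R t ∉ Rng p 0 11 20) ∨
        (L t ∉ Rng p 0 11 20 ∧ R t ∈ Rng p 0 11 20)))).card +
      ((Finset.range 435).filter (fun t => Cen p L k t ∧
      ((L t ∈ Rng p 0 21 30 ∧ R t ∉ Rng p 0 21 30) ∨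
        (L t ∉ Rng p 0 21 30 ∧ R t ∈ Rng p 0 21 30)))).card := by
    simp only [Finset.card_filter, Finset.mul_sum, ← Finset.sum_add_distrib]
    apply Finset.sum_congr rfl
    intro t ht
    by_cases hc : Cen p L k t
    · simp only [hc, true_and, mem_Rng]
      have m1 := h.mem 0 (by omega) (L t)
      have m2 := h.mem 0 (by omega) (R t)
      have e1 : p 0 (L t) ≤ 10 ∨ (11 ≤ p 0 (L t) ∧ p 0 (L t) ≤ 20) ∨ 21 ≤ p 0 (L t) := by omega
      have e2 : p 0 (R t) ≤ 10 ∨ (11 ≤ p 0 (R t) ∧ p 0 (R t) ≤ 20) ∨ 21 ≤ p 0 (R t) := by omega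
      generalize p 0 (L t) = u at *
      generalize p 0 (R t) = v at *
      clear b1 b2 b3 c2 c3 hN hD
      split_ifs <;> omega
    · simp [hc]
  rw [hM] at c2 c3
  omega

theorem allA10 (h : Sys p L R)
    (hD : ∀ s t, s < 435 → t < 435 → p 0 (L s) ≤ 10 → 11 ≤ p 0 (R s) → p 0 (R s) ≤ 20 →
      p 0 (L t) ≤ 20 → 21 ≤ p 0 (R t) → s < t)
    (hN : ((Finset.range 435).filter (fun t => Cen p L 10 t)).card = 270)
    {t : ℕ} (ht : t < 435) (hR : p 0 (R t) ≤ 10) : Cen p L 10 t := by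
  have hM : ∑ r ∈ Finset.Icc 1 10, fb 10 r = 45 := by decide
  have h1 := h.total (k := 10) (by omega) (by omega) hM hD (by rw [hN])
  have h2 := h.q_lt ht
  have m1 := h.mem 0 (by omega) (L t)
  refine h.class_eq (k := 10) h.clsA (by omega) (by omega) (hM.le.trans h1) ht ?_ ?_ ?_
  · simp only [Hm, Nat.not_lt_zero, if_false, mem_Rng]; omega
  · simp only [Gm, Nat.not_lt_zero, if_false, mem_Rng]; omega
  · left
    simp only [Hm, Nat.not_lt_zero, if_false, fb]; omega

theorem allA13 (h : Sys p L R)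
    (hD : ∀ s t, s < 435 → t < 435 → p 0 (L s) ≤ 10 → 11 ≤ p 0 (R s) → p 0 (R s) ≤ 20 →
      p 0 (L t) ≤ 20 → 21 ≤ p 0 (R t) → s < t)
    (hN : ((Finset.range 435).filter (fun t => Cen p L 13 t)).card = 144)
    {t : ℕ} (ht : t < 435) (hR : p 0 (R t) ≤ 10) (hc : 4 ≤ p 0 (L t) ∨ p 0 (R t) ≤ 4) :
    Cen p L 13 t := by
  have hM : ∑ r ∈ Finset.Icc 1 10, fb 13 r = 33 := by decide
  have h1 := h.total (k := 13) (by omega) (by omega) hM hD (by rw [hN])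
  have h2 := h.q_lt ht
  have m1 := h.mem 0 (by omega) (L t)
  refine h.class_eq (k := 13) h.clsA (by omega) (by omega) (hM.le.trans h1) ht ?_ ?_ ?_
  · simp only [Hm, Nat.not_lt_zero, if_false, mem_Rng]; omega
  · simp only [Gm, Nat.not_lt_zero, if_false, mem_Rng]; omega
  · simp only [Hm, Gm, Nat.not_lt_zero, if_false, fb]; omega

end Sys

namespace Sys

variable {p : ℕ → Fin 30 → ℕ} {L R : ℕ → Fin 30}

theorem stay (h : Sys p L R) {z : Fin 30} {v r : ℕ} (hr : v ≤ p r z)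
    (hst : ∀ t, t < 435 → R t = z → v ≤ p t (L t) ∨ p t (R t) < v) {r' : ℕ} (hrr : r ≤ r')
    (hr' : r' ≤ 435) : v ≤ p r' z := by
  induction r', hrr using Nat.le_induction with
  | base => exact hr
  | succ t ht ih =>
    have h0 := ih (by omega)
    have htt : t < 435 := by omega
    have h1 := hst t htt
    have h2 := h.s2 t htt
    have h3 := h.s3 t htt
    have h4 := h.s4 t htt z
    by_cases e1 : R t = z
    · have := h1 e1
      rw [e1] at this h3
      omega
    · by_cases e2 : L t = z
      · rw [e2] at h2; omega
      · rw [h4 (Ne.symm e2) (Ne.symm e1)]; exact h0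

theorem fut_count (h : Sys p L R)
    (P13 : ∀ t, t < 435 → p 0 (R t) ≤ 10 → (4 ≤ p 0 (L t) ∨ p 0 (R t) ≤ 4) → Cen p L 13 t)
    {s : ℕ} (hs : s ≤ 435) {x : Fin 30} (hx : 4 ≤ p 0 x) (hx' : p 0 x ≤ 10) (hp : p s x ≤ 14) :
    (Finset.univ.filter (fun y => p 0 x < p 0 y ∧ p 0 y ≤ 10 ∧ p s x < p s y)).card ≤
    3 + (Finset.univ.filter (fun y => p 0 y < p 0 x ∧ p s y < p s x)).card := by
  have h1 := h.tele_future (k := 13) (by omega) hs x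
  have h2 : clp 13 (p 435 x) - clp 13 (p s x) = 3 := by
    rw [h.rev]; unfold clp; push_cast; omega
  have h3 : (Finset.univ.filter (fun y => p 0 x < p 0 y ∧ p 0 y ≤ 10 ∧ p s x < p s y)).card ≤
      ((Finset.range 435).filter (fun t => s ≤ t ∧ Cen p L 13 t ∧ L t = x)).card := by
    refine (Finset.card_le_card ?_).trans (Finset.card_image_le (f := R))
    intro y hy
    simp only [Finset.mem_filter, Finset.mem_univ, true_and] at hy
    obtain ⟨τ, hτ1, hτ, rfl, rfl⟩ := h.future hs hy.1 hy.2.2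
    refine Finset.mem_image.2 ⟨τ, ?_, rfl⟩
    simp only [Finset.mem_filter, Finset.mem_range]
    exact ⟨hτ, hτ1, P13 τ hτ hy.2.1 (Or.inl hx), trivial⟩
  have h4 : ((Finset.range 435).filter (fun t => s ≤ t ∧ Cen p L 13 t ∧ R t = x)).card ≤
      (Finset.univ.filter (fun y => p 0 y < p 0 x ∧ p s y < p s x)).card := by
    apply Finset.card_le_card_of_injOn L
    · intro t ht
      simp at ht
      obtain ⟨ht, hst, _, rfl⟩ := ht
      simp only [Finset.coe_filter, Finset.mem_univ, true_and, Set.mem_ofPred_eq]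
      exact ⟨h.q_lt ht, (h.order ht hs).2 hst⟩
    · intro t ht t' ht' e
      simp at ht ht'
      exact h.uniq ht.1 ht'.1 e (by rw [ht.2.2.2, ht'.2.2.2])
  omega

theorem past_count (h : Sys p L R)
    (P13 : ∀ t, t < 435 → p 0 (R t) ≤ 10 → (4 ≤ p 0 (L t) ∨ p 0 (R t) ≤ 4) → Cen p L 13 t)
    {s : ℕ} (hs : s ≤ 435) {x : Fin 30} (hx : 4 ≤ p 0 x) (hx' : p 0 x ≤ 10) (hp : 17 ≤ p s x) :
    (Finset.univ.filter (fun y => p 0 x < p 0 y ∧ p 0 y ≤ 10 ∧ p s y < p s x)).card ≤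
    3 + (Finset.univ.filter (fun y => p 0 y < p 0 x ∧ p s x < p s y)).card := by
  have h1 := h.tele_past (k := 13) (by omega) hs x
  have h2 : clp 13 (p s x) - clp 13 (p 0 x) = 3 := by
    unfold clp; push_cast; omega
  have h3 : (Finset.univ.filter (fun y => p 0 x < p 0 y ∧ p 0 y ≤ 10 ∧ p s y < p s x)).card ≤
      ((Finset.range 435).filter (fun t => t < s ∧ Cen p L 13 t ∧ L t = x)).card := by
    refine (Finset.card_le_card ?_).trans (Finset.card_image_le (f := R))
    intro y hy
    simp only [Finset.mem_filter, Finset.mem_univ, true_and] at hy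
    obtain ⟨τ, hτ1, hτ, rfl, rfl⟩ := h.past hs hy.1 hy.2.2
    refine Finset.mem_image.2 ⟨τ, ?_, rfl⟩
    simp only [Finset.mem_filter, Finset.mem_range]
    exact ⟨hτ, hτ1, P13 τ hτ hy.2.1 (Or.inl hx), trivial⟩
  have h4 : ((Finset.range 435).filter (fun t => t < s ∧ Cen p L 13 t ∧ R t = x)).card ≤
      (Finset.univ.filter (fun y => p 0 y < p 0 x ∧ p s x < p s y)).card := by
    apply Finset.card_le_card_of_injOn L
    · intro t ht
      simp at ht
      obtain ⟨ht, hst, _, rfl⟩ := ht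
      simp only [Finset.coe_filter, Finset.mem_univ, true_and, Set.mem_ofPred_eq]
      refine ⟨h.q_lt ht, ?_⟩
      have h5 := h.order ht hs
      have h6 : p s (L t) ≠ p s (R t) := by
        intro e
        have := h.inj s hs _ _ e
        have h7 := h.q_lt ht
        rw [this] at h7; omega
      omega
    · intro t ht t' ht' e
      simp at ht ht'
      exact h.uniq ht.1 ht'.1 e (by rw [ht.2.2.2, ht'.2.2.2])
  omega

theorem endgame (h : Sys p L R)
    (hD : ∀ s t, s < 435 → t < 435 → p 0 (L s) ≤ 10 → 11 ≤ p 0 (R s) → p 0 (R s) ≤ 20 →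
      p 0 (L t) ≤ 20 → 21 ≤ p 0 (R t) → s < t)
    (P10 : ∀ t, t < 435 → p 0 (R t) ≤ 10 → Cen p L 10 t)
    (P13 : ∀ t, t < 435 → p 0 (R t) ≤ 10 → (4 ≤ p 0 (L t) ∨ p 0 (R t) ≤ 4) → Cen p L 13 t)
    {s : ℕ} (hs : s ≤ 435) {z0 : Fin 30} (hz0 : p 0 z0 = 1) (hz : p s z0 = 14) :
    (∀ x, p 0 x ≤ 10 → 11 ≤ p s x ∧ p s x ≤ 20) ∧
    (∀ x, 11 ≤ p 0 x → p 0 x ≤ 20 → p s x ≤ 10) ∧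
    (∀ x, 21 ≤ p 0 x → 21 ≤ p s x) ∧
    (∀ x, 2 ≤ p 0 x → p 0 x ≤ 4 → 15 ≤ p s x ∧ p s x ≤ 17) ∧
    (∀ x, p 0 x ≤ 10 → p s x = 11 → 7 ≤ p 0 x) ∧
    (∀ x, p 0 x ≤ 10 → p s x = 12 → 6 ≤ p 0 x) ∧
    (∀ x, p 0 x ≤ 10 → p s x = 20 → 7 ≤ p 0 x) ∧
    (∀ x, p 0 x ≤ 10 → p s x = 19 → 6 ≤ p 0 x) := by
  have hmono : ∀ r r', r ≤ r' → r' ≤ 435 → p r z0 ≤ p r' z0 := by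
    intro r r' hr hr'
    apply h.stay le_rfl _ hr hr'
    intro t ht e
    have h1 := h.q_lt ht
    have h2 := h.mem 0 (by omega) (L t)
    rw [e, hz0] at h1
    omega
  have hne : ∀ x y, p 0 x ≠ p 0 y → p s x ≠ p s y := by
    intro x y hxy e
    exact hxy (by rw [h.inj s hs x y e])
  have hA : ∀ x, p 0 x ≤ 10 → 11 ≤ p s x ∧ p s x ≤ 20 := by
    intro x hx
    by_cases hx1 : p 0 x = 1
    · have := h.inj 0 (by omega) x z0 (by omega)
      subst this; omega
    have hq := h.mem 0 (by omega) x
    have hn := hne x z0 (by omega)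
    constructor
    · by_contra hc
      obtain ⟨τ, h1, h2, h3, h4⟩ := h.past hs (x := z0) (y := x) (by omega) (by omega)
      have h5 := P10 τ h2 (by rw [h4]; exact hx)
      have h6 := h.s3 τ h2
      have : 11 ≤ p s x := by
        apply h.stay (r := τ + 1) _ _ h1 hs
        · rw [← h4, h6]; exact h5.1
        · intro t ht e
          left
          exact (P10 t ht (by rw [e]; exact hx)).1
      omega
    · by_contra hc
      obtain ⟨τ, h1, h2, h3, h4⟩ := h.future hs (x := z0) (y := x) (by omega) (by omega)
      have h5 := (P10 τ h2 (by rw [h4]; exact hx)).2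
      have h6 := h.s1 τ h2
      have : 21 ≤ p τ x := by
        apply h.stay (r := s) (by omega) _ h1 h2.le
        intro t ht e
        right
        have h7 := (P10 t ht (by rw [e]; exact hx)).2
        have h8 := h.s1 t ht
        omega
      rw [h4] at h6
      omega
  have h24 : ∀ x, 2 ≤ p 0 x → p 0 x ≤ 4 → 15 ≤ p s x ∧ p s x ≤ 17 := by
    intro x hx hx'
    have hn := hne x z0 (by omega)
    have h15 : 15 ≤ p s x := by
      by_contra hc
      obtain ⟨τ, h1, h2, h3, h4⟩ := h.past hs (x := z0) (y := x) (by omega) (by omega)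
      have h5 := (P13 τ h2 (by rw [h4]; omega) (by rw [h4]; omega)).1
      have h6 := h.s2 τ h2
      have h7 := hmono (τ + 1) s h1 hs
      rw [h3] at h5 h6
      omega
    refine ⟨h15, ?_⟩
    by_contra hc
    obtain ⟨τ, h1, h2, h3, h4⟩ := h.future hs (x := z0) (y := x) (by omega) (by omega)
    have h5 := (P13 τ h2 (by rw [h4]; omega) (by rw [h4]; omega)).2
    have h6 := h.s1 τ h2
    have : 18 ≤ p τ x := by
      apply h.stay (r := s) (by omega) _ h1 h2.le
      intro t ht e
      right
      have h7 := (P13 t ht (by rw [e]; omega) (by rw [e]; omega)).2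
      have h8 := h.s1 t ht
      omega
    rw [h4] at h6
    omega
  -- `A` occupies exactly `11..20`
  have hAeq : Rng p 0 1 10 = Rng p s 11 20 := by
    apply Finset.eq_of_subset_of_card_le
    · intro x hx
      rw [mem_Rng] at hx ⊢
      exact hA x hx.2
    · rw [h.card_Rng hs (by omega) (by omega), h.card_Rng (by omega) (by omega) (by omega)]
  have hout : ∀ x, 11 ≤ p 0 x → p s x ≤ 10 ∨ 21 ≤ p s x := by
    intro x hx
    by_contra hc
    have : x ∈ Rng p s 11 20 := mem_Rng.2 (by omega)
    rw [← hAeq, mem_Rng] at this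
    omega
  have hC : ∀ x, 21 ≤ p 0 x → 21 ≤ p s x := by
    intro x hx
    rcases hout x (by omega) with h1 | h1
    swap
    · exact h1
    exfalso
    obtain ⟨τ, t1, t2, t3, t4⟩ := h.past hs (x := z0) (y := x) (by omega) (by omega)
    have hB : ∀ y, 11 ≤ p 0 y → p 0 y ≤ 20 → p s y ≤ 10 := by
      intro y hy hy'
      obtain ⟨σ, s2, s3, s4⟩ := h.exists_swap (x := z0) (y := y) (by omega)
      have h5 := hD σ τ s2 t2 (by rw [s3]; omega) (by rw [s4]; omega) (by rw [s4]; omega)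
        (by rw [t3]; omega) (by rw [t4]; omega)
      have h6 := h.order s2 hs
      rw [s3, s4] at h6
      have := hout y hy
      omega
    have hsub : insert x (Rng p 0 11 20) ⊆ Rng p s 1 10 := by
      intro y hy
      have hm := h.mem s hs y
      rw [Finset.mem_insert] at hy
      rw [mem_Rng]
      rcases hy with rfl | hy
      · omega
      · rw [mem_Rng] at hy
        have := hB y hy.1 hy.2
        omega
    have hc := Finset.card_le_card hsub
    rw [Finset.card_insert_of_notMem (by rw [mem_Rng]; omega), h.card_Rng hs (by omega) (by omega),
      h.card_Rng (by omega) (by omega) (by omega)] at hc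
    omega
  have hCeq : Rng p 0 21 30 = Rng p s 21 30 := by
    apply Finset.eq_of_subset_of_card_le
    · intro x hx
      rw [mem_Rng] at hx ⊢
      exact ⟨hC x hx.1, (h.mem s hs x).2⟩
    · rw [h.card_Rng hs (by omega) (by omega), h.card_Rng (by omega) (by omega) (by omega)]
  have hB : ∀ x, 11 ≤ p 0 x → p 0 x ≤ 20 → p s x ≤ 10 := by
    intro x hx hx'
    rcases hout x hx with h1 | h1
    · exact h1
    · have : x ∈ Rng p s 21 30 := mem_Rng.2 ⟨h1, (h.mem s hs x).2⟩
      rw [← hCeq, mem_Rng] at this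
      omega
  have h5 : ∀ x, p 0 x ≤ 10 → (p s x ≤ 13 ∨ 18 ≤ p s x) → 5 ≤ p 0 x := by
    intro x hx hx'
    by_contra hc
    by_cases e : p 0 x = 1
    · have := h.inj 0 (by omega) x z0 (by omega)
      subst this; omega
    · have := h.mem 0 (by omega) x
      have := h24 x (by omega) (by omega)
      omega
  have h11 : ∀ x, p 0 x ≤ 10 → p s x = 11 → 7 ≤ p 0 x := by
    intro x hx hx'
    have hx5 := h5 x hx (by omega)
    have h1 := h.fut_count P13 hs (x := x) (by omega) hx (by omega)
    have h2 : Finset.univ.filter (fun y => p 0 y < p 0 x ∧ p s y < p s x) = ∅ := by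
      apply Finset.filter_false_of_mem
      intro y _
      have := hA y
      omega
    have h3 : Rng p 0 (p 0 x + 1) 10 ⊆
        Finset.univ.filter (fun y => p 0 x < p 0 y ∧ p 0 y ≤ 10 ∧ p s x < p s y) := by
      intro y hy
      rw [mem_Rng] at hy
      have := hA y hy.2
      have := hne y x (by omega)
      simp only [Finset.mem_filter, Finset.mem_univ, true_and]
      omega
    have h4 := Finset.card_le_card h3
    rw [h.card_Rng (by omega) (by omega) (by omega)] at h4
    rw [h2, Finset.card_empty] at h1
    omega
  have h20 : ∀ x, p 0 x ≤ 10 → p s x = 20 → 7 ≤ p 0 x := by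
    intro x hx hx'
    have hx5 := h5 x hx (by omega)
    have h1 := h.past_count P13 hs (x := x) (by omega) hx (by omega)
    have h2 : Finset.univ.filter (fun y => p 0 y < p 0 x ∧ p s x < p s y) = ∅ := by
      apply Finset.filter_false_of_mem
      intro y _
      have := hA y
      omega
    have h3 : Rng p 0 (p 0 x + 1) 10 ⊆
        Finset.univ.filter (fun y => p 0 x < p 0 y ∧ p 0 y ≤ 10 ∧ p s y < p s x) := by
      intro y hy
      rw [mem_Rng] at hy
      have := hA y hy.2
      have := hne y x (by omega)
      simp only [Finset.mem_filter, Finset.mem_univ, true_and]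
      omega
    have h4 := Finset.card_le_card h3
    rw [h.card_Rng (by omega) (by omega) (by omega)] at h4
    rw [h2, Finset.card_empty] at h1
    omega
  refine ⟨hA, hB, hC, h24, h11, ?_, h20, ?_⟩
  · intro x hx hx'
    have hx5 := h5 x hx (by omega)
    obtain ⟨v, hv⟩ := h.surj hs (v := 11) (by omega) (by omega)
    have h1 := h.fut_count P13 hs (x := x) (by omega) hx (by omega)
    by_contra hc
    have h2 : Finset.univ.filter (fun y => p 0 y < p 0 x ∧ p s y < p s x) = ∅ := by
      apply Finset.filter_false_of_mem
      intro y _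
      have := hA y
      have := h11 y
      omega
    have h3 : (Rng p 0 (p 0 x + 1) 10).erase v ⊆
        Finset.univ.filter (fun y => p 0 x < p 0 y ∧ p 0 y ≤ 10 ∧ p s x < p s y) := by
      intro y hy
      rw [Finset.mem_erase, mem_Rng] at hy
      have := hA y hy.2.2
      have := hne y x (by omega)
      have : p s y ≠ 11 := fun e => hy.1 (h.inj s hs _ _ (by omega))
      simp only [Finset.mem_filter, Finset.mem_univ, true_and]
      omega
    have h4 := Finset.card_le_card h3
    have h6 := Finset.pred_card_le_card_erase (s := Rng p 0 (p 0 x + 1) 10) (a := v)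
    rw [h.card_Rng (by omega) (by omega) (by omega)] at h6
    rw [h2, Finset.card_empty] at h1
    omega
  · intro x hx hx'
    have hx5 := h5 x hx (by omega)
    obtain ⟨v, hv⟩ := h.surj hs (v := 20) (by omega) (by omega)
    have h1 := h.past_count P13 hs (x := x) (by omega) hx (by omega)
    by_contra hc
    have h2 : Finset.univ.filter (fun y => p 0 y < p 0 x ∧ p s x < p s y) = ∅ := by
      apply Finset.filter_false_of_mem
      intro y _
      have := hA y
      have := h20 y
      omega
    have h3 : (Rng p 0 (p 0 x + 1) 10).erase v ⊆
        Finset.univ.filter (fun y => p 0 x < p 0 y ∧ p 0 y ≤ 10 ∧ p s y < p s x) := by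
      intro y hy
      rw [Finset.mem_erase, mem_Rng] at hy
      have := hA y hy.2.2
      have := hne y x (by omega)
      have : p s y ≠ 20 := fun e => hy.1 (h.inj s hs _ _ (by omega))
      simp only [Finset.mem_filter, Finset.mem_univ, true_and]
      omega
    have h4 := Finset.card_le_card h3
    have h6 := Finset.pred_card_le_card_erase (s := Rng p 0 (p 0 x + 1) 10) (a := v)
    rw [h.card_Rng (by omega) (by omega) (by omega)] at h6
    rw [h2, Finset.card_empty] at h1
    omega

end Sys

theorem NLe_count (hp : HalfPeriod 30) {L R : ℕ → Fin 30} (h : Sys hp.pos L R) {k : ℕ}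
    (hk : k ≤ 14) :
    hp.NLe k + ((Finset.range 435).filter (fun t => Cen hp.pos L k t)).card = 435 := by
  have e : {t : ℕ | t < HalfPeriod.steps 30 ∧ hp.LeCritical t k} =
      (((Finset.range 435).filter (fun t => ¬ Cen hp.pos L k t) : Finset ℕ) : Set ℕ) := by
    ext t
    simp only [Finset.coe_filter, Finset.mem_range, Set.mem_ofPred_eq, HalfPeriod.steps]
    refine and_congr_right (fun ht => ?_)
    have ht : t < 435 := ht
    have s1 := h.s1 t ht
    have s2 := h.s2 t ht
    have s3 := h.s3 t ht
    have m1 := h.mem t ht.le (L t)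
    have m2 := h.mem t ht.le (R t)
    have hg : ∀ i, hp.GateAt t i ↔ hp.pos t (L t) = i := by
      intro i
      constructor
      · rintro ⟨x, y, h1, h2, h3, h4⟩
        by_cases ex : x = L t
        · rw [← ex]; exact h1
        · by_cases ex' : x = R t
          · rw [ex'] at h1 h3; omega
          · have := h.s4 t ht x ex ex'
            omega
      · rintro rfl
        exact ⟨L t, R t, rfl, s1, s2, s3⟩
    simp only [HalfPeriod.LeCritical, HalfPeriod.Critical, hg, Cen]
    constructor
    · rintro ⟨i, h1, h2, h3⟩; omega
    · intro hc
      by_cases h1 : hp.pos t (L t) ≤ k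
      · exact ⟨_, m1.1, h1, Or.inl rfl⟩
      · exact ⟨30 - hp.pos t (L t), by omega, by omega, by omega⟩
  unfold HalfPeriod.NLe
  rw [e, Set.ncard_coe_finset, add_comm, Finset.card_filter_add_card_filter_not]
  simp

theorem exists_sys (hp : HalfPeriod 30) : ∃ L R : ℕ → Fin 30, Sys hp.pos L R := by
  have hst : ∀ t, ∃ x y : Fin 30, t < 435 →
    (hp.pos t y = hp.pos t x + 1 ∧ hp.pos (t + 1) x = hp.pos t x + 1 ∧
      hp.pos (t + 1) y = hp.pos t x ∧
    ∀ z, z ≠ x → z ≠ y → hp.pos (t + 1) z = hp.pos t z) := by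
    intro t
    by_cases ht : t < 435
    · obtain ⟨x, y, hxy⟩ := hp.step t ht
      exact ⟨x, y, fun _ => hxy⟩
    · exact ⟨0, 0, fun h => absurd h ht⟩
  choose L R hLR using hst
  exact ⟨L, R, fun t ht x => hp.pos_mem t ht x, fun t ht x y e => hp.pos_inj t ht e,
    fun t ht => (hLR t ht).1, fun t ht => (hLR t ht).2.1, fun t ht => (hLR t ht).2.2.1,
    fun t ht => (hLR t ht).2.2.2, fun x => hp.reverse x⟩

/-- In the arrangement `π_{a_10}` of `Π` immediately after the swap in
which `a_10` enters the 13-center: positions `1`–`10` are occupied by the elements of `B`,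
positions `21`–`30` by the elements of `C`, position `14` by `a_10`, positions `15, 16, 17`
by `a_7, a_8, a_9` in some order, positions `11, 12, 13` respectively by elements `a_u`
with `u ≤ 4`, `u ≤ 5`, `u ≤ 6`, and positions `18, 19, 20` respectively by elements `a_u`
with `u ≤ 6`, `u ≤ 5`, `u ≤ 4` (subscripts are 1-indexed: `a_u = a ⟨u-1⟩`). -/
theorem arrangement_after_a10_enters (hp : HalfPeriod 30) (a b c : Fin 10 → Fin 30)
    (h3 : IsThreeDecompLabeling30 hp a b c)
    (hN1 : ∀ k : ℕ, 1 ≤ k → k ≤ 10 → hp.NLe k = 3 * Nat.choose (k + 1) 2)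
    (hN2 : ∀ k : ℕ, 11 ≤ k → k ≤ 13 →
      hp.NLe k = 3 * Nat.choose (k + 1) 2 + 3 * Nat.choose (k - 9) 2)
    (t : ℕ) (ht : EntersCenterAt hp 13 (a 9) t) :
    (∀ j : Fin 10, 1 ≤ hp.pos (t + 1) (b j) ∧ hp.pos (t + 1) (b j) ≤ 10) ∧
    (∀ j : Fin 10, 21 ≤ hp.pos (t + 1) (c j) ∧ hp.pos (t + 1) (c j) ≤ 30) ∧
    hp.pos (t + 1) (a 9) = 14 ∧
    (∀ p : ℕ, 11 ≤ p → p ≤ 20 → ∃ u : Fin 10, hp.pos (t + 1) (a u) = p) ∧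
    (∀ u : Fin 10,
      (hp.pos (t + 1) (a u) = 15 ∨ hp.pos (t + 1) (a u) = 16 ∨ hp.pos (t + 1) (a u) = 17) ↔
      ((u : ℕ) = 6 ∨ (u : ℕ) = 7 ∨ (u : ℕ) = 8)) ∧
    (∀ u : Fin 10, hp.pos (t + 1) (a u) = 11 → (u : ℕ) + 1 ≤ 4) ∧
    (∀ u : Fin 10, hp.pos (t + 1) (a u) = 12 → (u : ℕ) + 1 ≤ 5) ∧
    (∀ u : Fin 10, hp.pos (t + 1) (a u) = 13 → (u : ℕ) + 1 ≤ 6) ∧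
    (∀ u : Fin 10, hp.pos (t + 1) (a u) = 18 → (u : ℕ) + 1 ≤ 6) ∧
    (∀ u : Fin 10, hp.pos (t + 1) (a u) = 19 → (u : ℕ) + 1 ≤ 5) ∧
    (∀ u : Fin 10, hp.pos (t + 1) (a u) = 20 → (u : ℕ) + 1 ≤ 4) := by
  obtain ⟨-, ha, hb, hc, hD1, -⟩ := h3
  obtain ⟨L, R, h⟩ := exists_sys hp
  have hstep : HalfPeriod.steps 30 = 435 := rfl
  have findA : ∀ x, hp.pos 0 x ≤ 10 → ∃ i, x = a i := by
    intro x hx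
    have := h.mem 0 (by omega) x
    refine ⟨⟨10 - hp.pos 0 x, by omega⟩, h.inj 0 (by omega) _ _ ?_⟩
    rw [ha]; simp only; omega
  have findB : ∀ x, 11 ≤ hp.pos 0 x → hp.pos 0 x ≤ 20 → ∃ i, x = b i := by
    intro x hx hx'
    refine ⟨⟨hp.pos 0 x - 11, by omega⟩, h.inj 0 (by omega) _ _ ?_⟩
    rw [hb]; simp only; omega
  have findC : ∀ x, 21 ≤ hp.pos 0 x → ∃ i, x = c i := by
    intro x hx
    have := h.mem 0 (by omega) x
    refine ⟨⟨hp.pos 0 x - 21, by omega⟩, h.inj 0 (by omega) _ _ ?_⟩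
    rw [hc]; simp only; omega
  have hsw : ∀ s, s < 435 → hp.SwapsAt s (L s) (R s) ∧ hp.SwapsAt s (R s) (L s) := by
    intro s hs
    have s1 := h.s1 s hs
    have s2 := h.s2 s hs
    have s3 := h.s3 s hs
    have hne : L s ≠ R s := by intro e; rw [← e] at s1; omega
    have m1 : hp.Moved s (L s) := by unfold HalfPeriod.Moved; omega
    have m2 : hp.Moved s (R s) := by unfold HalfPeriod.Moved; omega
    exact ⟨⟨hne, m1, m2⟩, ⟨hne.symm, m2, m1⟩⟩
  have hD : ∀ s t, s < 435 → t < 435 → hp.pos 0 (L s) ≤ 10 → 11 ≤ hp.pos 0 (R s) →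
      hp.pos 0 (R s) ≤ 20 → hp.pos 0 (L t) ≤ 20 → 21 ≤ hp.pos 0 (R t) → s < t := by
    intro s t hs ht h1 h2 h3 h4 h5
    apply hD1 s t hs ht
    · obtain ⟨i, hi⟩ := findA _ h1
      obtain ⟨j, hj⟩ := findB _ h2 h3
      exact ⟨i, j, by rw [← hi, ← hj]; exact (hsw s hs).1⟩
    · obtain ⟨i, hi⟩ := findC _ h5
      refine ⟨i, L t, ?_, by rw [← hi]; exact (hsw t ht).2⟩
      by_cases h6 : hp.pos 0 (L t) ≤ 10
      · exact Or.inl (findA _ h6)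
      · exact Or.inr (findB _ (by omega) h4)
  have n10 : ((Finset.range 435).filter (fun t => Cen hp.pos L 10 t)).card = 270 := by
    have h1 := NLe_count hp h (k := 10) (by omega)
    rw [hN1 10 (by omega) (by omega)] at h1
    have : Nat.choose (10 + 1) 2 = 55 := by decide
    omega
  have n13 : ((Finset.range 435).filter (fun t => Cen hp.pos L 13 t)).card = 144 := by
    have h1 := NLe_count hp h (k := 13) (by omega)
    rw [hN2 13 (by omega) (by omega)] at h1
    have : Nat.choose (13 + 1) 2 = 91 := by decide
    have : Nat.choose (13 - 9) 2 = 6 := by decide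
    omega
  have q9 : hp.pos 0 (a 9) = 1 := by rw [ha]; rfl
  obtain ⟨ht, hin, hnin, -⟩ := ht
  rw [hstep] at ht
  have h14 : hp.pos (t + 1) (a 9) = 14 := by
    have s2 := h.s2 t ht
    have s4 := h.s4 t ht (a 9)
    have hR : a 9 ≠ R t := by
      intro e
      have h1 := h.q_lt ht
      have h2 := h.mem 0 (by omega) (L t)
      rw [← e, q9] at h1
      omega
    unfold InCenter at hin hnin
    by_cases hL : a 9 = L t
    · rw [← hL] at s2; omega
    · have := s4 hL hR
      omega
  have hs : t + 1 ≤ 435 := ht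
  obtain ⟨eA, eB, eC, e24, e11, e12, e20, e19⟩ := h.endgame hD
    (fun t ht hR => h.allA10 hD n10 ht hR) (fun t ht hR hc => h.allA13 hD n13 ht hR hc)
    hs q9 h14
  have hsurj : ∀ v : ℕ, 11 ≤ v → v ≤ 20 → ∃ u : Fin 10, hp.pos (t + 1) (a u) = v := by
    intro v h1 h2
    obtain ⟨x, hx⟩ := h.surj hs (v := v) (by omega) (by omega)
    have hx0 : hp.pos 0 x ≤ 10 := by
      by_contra hcon
      have := eB x
      have := eC x
      omega
    obtain ⟨i, rfl⟩ := findA x hx0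
    exact ⟨i, hx⟩
  have h1417 : ∀ u : Fin 10, 6 ≤ (u : ℕ) →
      14 ≤ hp.pos (t + 1) (a u) ∧ hp.pos (t + 1) (a u) ≤ 17 := by
    intro u hu
    have := u.2
    by_cases h9 : (u : ℕ) = 9
    · have : u = 9 := Fin.ext h9
      subst this; omega
    · have hu' := ha u
      have := e24 (a u) (by omega) (by omega)
      omega
  refine ⟨?_, ?_, h14, hsurj, ?_, ?_, ?_, ?_, ?_, ?_, ?_⟩
  · intro j
    have := hb j
    have := j.2
    exact ⟨(h.mem _ hs _).1, eB _ (by omega) (by omega)⟩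
  · intro j
    have := hc j
    exact ⟨eC _ (by omega), (h.mem _ hs _).2⟩
  · have hsub : Finset.image (fun u : Fin 10 => a u) {6, 7, 8} ⊆ Rng hp.pos (t + 1) 15 17 := by
      intro x hx
      obtain ⟨u, hu, rfl⟩ := Finset.mem_image.1 hx
      rw [Sys.mem_Rng]
      have hu' := ha u
      have : (u : ℕ) = 6 ∨ (u : ℕ) = 7 ∨ (u : ℕ) = 8 := by
        simp only [Finset.mem_insert, Finset.mem_singleton] at hu
        rcases hu with rfl | rfl | rfl <;> simp
      exact e24 _ (by omega) (by omega)
    have hainj : Function.Injective a := by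
      intro u v e
      have h1 := ha u
      have h2 := ha v
      have := u.2
      have := v.2
      rw [e] at h1
      apply Fin.ext
      omega
    have heq := Finset.eq_of_subset_of_card_le hsub (by
      rw [h.card_Rng hs (by omega) (by omega), Finset.card_image_of_injective _ hainj]
      decide)
    intro u
    constructor
    · intro hu
      have : a u ∈ Rng hp.pos (t + 1) 15 17 := Sys.mem_Rng.2 (by omega)
      rw [← heq] at this
      obtain ⟨v, hv, hv'⟩ := Finset.mem_image.1 this
      rw [hainj hv'] at hv
      simp only [Finset.mem_insert, Finset.mem_singleton] at hv
      rcases hv with rfl | rfl | rfl <;> simp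
    · intro hu
      have hu' := ha u
      have := e24 (a u) (by omega) (by omega)
      omega
  all_goals
    intro u hu
    have h1 := ha u
    have h2 := u.2
    have h3 := e11 (a u) (by omega)
    have h4 := e12 (a u) (by omega)
    have h5 := e19 (a u) (by omega)
    have h6 := e20 (a u) (by omega)
    have h7 := h1417 u
    omega
end
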